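/- arXiv:1810.01034 — 5 statements merged into one kernel-verified Lean document; each statement's English description precedes it below -/
import Mathlib

section
/- Let k be a field with char k ≠ 2, let V be a finite-dimensional k-vector space with a nondegenerate alternating bilinear form ⟨·,·⟩, and let N be a skew-adjoint nilpotent endomorphism of V. Then for every odd integer i ≥ 1, the number of Jordan blocks of N of size i is even; equivalently, dim ker(N^{i−1}) + dim ker(N^{i+1}) is even (the number of Jordan blocks of size i equals 2·dim ker(N^i) − dim ker(N^{i−1}) − dim ker(N^{i+1})). -/
/-!
Composing a symplectic form `B` with `g ∘ f`, where `g` is the adjoint of `f`, gives the alternating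
form `B (g (f x)) y = B (f x) (f y)`, so `g ∘ f` has even rank. For skew-adjoint `N`, taking
`f = N ^ m` and `g = (-N) ^ m` shows that every even power of `N` has even rank. When `i` is odd,
`i - 1` and `i + 1` are even, and the dimensions of the two kernels add up to `2 * dim V` minus two
even ranks.

That an alternating form has even rank follows from the dimension formula for orthogonal
complements, applied to a maximal totally isotropic subspace: it equals its own complement.
-/

open Module Submodule
open LinearMap hiding mem_ker

section Isotropic

variable {R M : Type*} [CommSemiring R] [AddCommMonoid M] [Module R M]
  {B : LinearMap.BilinForm R M}

theorem sup_le_orthogonal_sup (hB : B.IsRefl) {L L' : Submodule R M} (hL : L ≤ B.orthogonal L)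
    (hL' : L' ≤ B.orthogonal L') (hLL' : L' ≤ B.orthogonal L) :
    L ⊔ L' ≤ B.orthogonal (L ⊔ L') := by
  intro p hp q hq
  obtain ⟨x, hx, x', hx', rfl⟩ := mem_sup.mp hp
  obtain ⟨y, hy, y', hy', rfl⟩ := mem_sup.mp hq
  have hyx : B y' x = 0 := hB _ _ (hLL' hy' x hx)
  simp [hL hx y hy, hLL' hx' y hy, hyx, hL' hx' y' hy']

theorem span_singleton_le_orthogonal {v : M} (hv : B v v = 0) : R ∙ v ≤ B.orthogonal (R ∙ v) := by
  intro p hp q hq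
  obtain ⟨a, rfl⟩ := mem_span_singleton.mp hp
  obtain ⟨b, rfl⟩ := mem_span_singleton.mp hq
  simp [hv]

end Isotropic

theorem exists_orthogonal_eq_self {R M : Type*} [CommRing R] [AddCommGroup M] [Module R M]
    [IsNoetherian R M] {B : LinearMap.BilinForm R M} (hB : B.IsAlt) :
    ∃ L : Submodule R M, B.orthogonal L = L := by
  obtain ⟨L, hL, hmax⟩ := set_has_maximal_iff_noetherian.mpr ‹IsNoetherian R M›
    {L | L ≤ B.orthogonal L} ⟨⊥, bot_le (a := B.orthogonal ⊥)⟩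
  refine ⟨L, le_antisymm (fun v hv ↦ ?_) hL⟩
  have hsup : L ⊔ R ∙ v ≤ B.orthogonal (L ⊔ R ∙ v) :=
    sup_le_orthogonal_sup hB.isRefl hL (span_singleton_le_orthogonal (hB v))
      ((span_singleton_le_iff_mem _ _).mpr hv)
  have hL_eq : L = L ⊔ R ∙ v := le_sup_left.eq_of_not_lt (hmax _ hsup)
  rw [hL_eq]
  exact mem_sup_right (mem_span_singleton_self v)

theorem isAdjointPair_pow {R M M' : Type*} [CommSemiring R] [AddCommMonoid M] [Module R M]
    [AddCommMonoid M'] [Module R M'] {B : M →ₗ[R] M →ₗ[R] M'} {f g : End R M}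
    (h : IsAdjointPair B B f g) (m : ℕ) :
    IsAdjointPair B B (f ^ m : End R M) (g ^ m : End R M) := by
  induction m with
  | zero => exact isAdjointPair_one
  | succ m ih =>
    rw [pow_succ f, pow_succ' g]
    exact ih.mul h

theorem isAlt_comp_mul_of_isAdjointPair {R M : Type*} [CommRing R] [AddCommGroup M] [Module R M]
    {B : LinearMap.BilinForm R M} (hB : B.IsAlt) {f g : End R M} (h : IsAdjointPair B B f g) :
    (B.compLeft (g * f)).IsAlt := by
  intro x
  calc B (g (f x)) x = -B x (g (f x)) := (hB.neg_eq x _).symm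
    _ = -B (f x) (f x) := by rw [h]
    _ = 0 := by rw [hB.self_eq_zero, neg_zero]

section Rank

variable {k V : Type*} [Field k] [AddCommGroup V] [Module k V] [FiniteDimensional k V]
  {B : LinearMap.BilinForm k V}

theorem even_finrank_range_of_isAlt (hB : B.IsAlt) : Even (finrank k (range B)) := by
  obtain ⟨L, hL⟩ := exists_orthogonal_eq_self hB
  have hker : ker B ≤ L :=
    calc ker B = B.orthogonal ⊤ := (LinearMap.BilinForm.orthogonal_top_eq_ker hB.isRefl).symm
      _ ≤ B.orthogonal L := LinearMap.BilinForm.orthogonal_le le_top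
      _ = L := hL
  have hdim : finrank k L + finrank k L = finrank k V + finrank k (ker B) := by
    have hcompl := LinearMap.BilinForm.finrank_add_finrank_orthogonal' (B := B) L
    rwa [hL, inf_eq_right.mpr hker] at hcompl
  have hrank := finrank_range_add_finrank_ker B
  exact ⟨finrank k L - finrank k (ker B), by omega⟩

theorem even_finrank_range_mul_of_isAdjointPair (hB : B.IsAlt) (hsep : B.SeparatingLeft)
    {f g : End k V} (h : IsAdjointPair B B f g) : Even (finrank k (range (g * f))) := by
  have hinj : Function.Injective B := ker_eq_bot.mp (separatingLeft_iff_ker_eq_bot.mp hsep)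
  rw [(equivMapOfInjective B hinj (range (g * f))).finrank_eq, ← range_comp]
  exact even_finrank_range_of_isAlt (isAlt_comp_mul_of_isAdjointPair hB h)

theorem even_finrank_range_pow_of_isSkewAdjoint (hB : B.IsAlt) (hsep : B.SeparatingLeft)
    {N : End k V} (hN : B.IsSkewAdjoint N) {n : ℕ} (hn : Even n) :
    Even (finrank k (range (N ^ n))) := by
  obtain ⟨m, rfl⟩ := hn
  have hpair : IsAdjointPair B B (N ^ m : End k V) ((-N) ^ m : End k V) :=
    isAdjointPair_pow (g := -N) hN m
  have hrange : range ((-N) ^ m * N ^ m) = range (N ^ (m + m)) := by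
    rcases m.even_or_odd with hm | hm <;> simp [hm.neg_pow, pow_add, range_neg]
  exact hrange ▸ even_finrank_range_mul_of_isAdjointPair hB hsep hpair

theorem even_finrank_ker_add_finrank_ker {f g : End k V} (hf : Even (finrank k (range f)))
    (hg : Even (finrank k (range g))) : Even (finrank k (ker f) + finrank k (ker g)) := by
  have hdimf := finrank_range_add_finrank_ker f
  have hdimg := finrank_range_add_finrank_ker g
  grind

theorem stmt0_general (hB : B.IsAlt) (hsep : B.SeparatingLeft) {N : End k V}
    (hN : B.IsSkewAdjoint N) {i : ℕ} (hodd : Odd i) :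
    Even (2 * finrank k (ker (N ^ i)) - finrank k (ker (N ^ (i - 1)))
        - finrank k (ker (N ^ (i + 1)))) ∧
    Even (finrank k (ker (N ^ (i - 1))) + finrank k (ker (N ^ (i + 1)))) := by
  have hsum : Even (finrank k (ker (N ^ (i - 1))) + finrank k (ker (N ^ (i + 1)))) :=
    even_finrank_ker_add_finrank_ker
      (even_finrank_range_pow_of_isSkewAdjoint hB hsep hN (hodd.tsub_odd odd_one))
      (even_finrank_range_pow_of_isSkewAdjoint hB hsep hN hodd.add_one)
  refine ⟨?_, hsum⟩
  rw [Nat.sub_sub]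
  exact (even_two_mul _).tsub hsum

end Rank

/-- For a skew-adjoint nilpotent endomorphism of a finite-dimensional vector space with a
nondegenerate alternating bilinear form (char ≠ 2), every odd Jordan block size occurs with
even multiplicity; the multiplicity of size `i` is
`2 * dim ker N^i - dim ker N^(i-1) - dim ker N^(i+1)`, and equivalently
`dim ker N^(i-1) + dim ker N^(i+1)` is even. -/
theorem stmt0 (k : Type*) [Field k] (hchar : (2 : k) ≠ 0)
    (V : Type*) [AddCommGroup V] [Module k V] [FiniteDimensional k V]
    (B : V →ₗ[k] V →ₗ[k] k)
    (hBnd : ∀ x : V, (∀ y : V, B x y = 0) → x = 0)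
    (halt : ∀ x : V, B x x = 0)
    (N : Module.End k V)
    (hskew : ∀ x y : V, B (N x) y = - B x (N y))
    (hnil : IsNilpotent N)
    (i : ℕ) (hodd : Odd i) (hi : 1 ≤ i) :
    Even (2 * Module.finrank k ↥(LinearMap.ker (N ^ i))
        - Module.finrank k ↥(LinearMap.ker (N ^ (i - 1)))
        - Module.finrank k ↥(LinearMap.ker (N ^ (i + 1)))) ∧
    Even (Module.finrank k ↥(LinearMap.ker (N ^ (i - 1)))
        + Module.finrank k ↥(LinearMap.ker (N ^ (i + 1)))) := by
  exact stmt0_general halt hBnd (fun x y ↦ by simpa using hskew x y) hodd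
end

section
/- Let k be a field with char k ≠ 2, let V be a k-vector space of dimension 2n with a nondegenerate alternating bilinear form ⟨·,·⟩, and let λ = (λ₁ ≥ λ₂ ≥ ⋯) be a partition of 2n in which every odd part occurs with even multiplicity. Then there exists a skew-adjoint nilpotent endomorphism N of V with Jordan type λ, i.e., dim ker(N^t) = ∑_j min(t, λ_j) for all t ≥ 0. -/
/-!
Nondegenerate alternating forms on spaces of equal finite dimension are isometric: any nonzero
vector lies in a hyperbolic plane, and a plane on which the form is nondegenerate splits off
orthogonally. It therefore suffices to exhibit one symplectic space with a skew-adjoint nilpotent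
endomorphism of Jordan type `λ`, and orthogonal sums reduce this to two kinds of pieces.
An even part `p` is realised by the Jordan block on `kᵖ`, which is skew-adjoint for
`⟨x, y⟩ = ∑ i, (-1)ⁱ xᵢ yₚ₋₁₋ᵢ`, which is alternating because `p` is even. The odd parts form
a multiset `o + o`; if `A` is nilpotent of type `o` on `L`, then `A × (-Aᵀ)` is skew-adjoint of
type `o + o` on the hyperbolic space `L × L*`.
-/

open LinearMap Module

section HasJordanType

variable {k V W : Type*} [Field k] [AddCommGroup V] [Module k V] [AddCommGroup W] [Module k W]

/-- `N` is nilpotent and the sizes of its Jordan blocks are the elements of `s`, expressed through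
the dimensions of the kernels of its powers. Zeros in `s` are allowed and carry no information. -/
structure HasJordanType (N : End k V) (s : Multiset ℕ) : Prop where
  isNilpotent : IsNilpotent N
  finrank_ker_pow (t : ℕ) : finrank k (ker (N ^ t)) = (s.map fun p => min t p).sum

theorem finrank_submodule_prod [FiniteDimensional k V] [FiniteDimensional k W]
    (p : Submodule k V) (q : Submodule k W) :
    finrank k (p.prod q) = finrank k p + finrank k q := by
  have hrange : p.prod q = range (p.subtype.prodMap q.subtype) := by
    rw [range_prodMap, Submodule.range_subtype, Submodule.range_subtype]
  rw [hrange, finrank_range_of_inj (p.subtype_injective.prodMap q.subtype_injective),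
    finrank_prod]

theorem finrank_ker_dualMap [FiniteDimensional k V] (f : End k V) :
    finrank k (ker f.dualMap) = finrank k (ker f) := by
  have hf := f.finrank_range_add_finrank_ker
  have hdual := f.dualMap.finrank_range_add_finrank_ker
  rw [finrank_range_dualMap_eq_finrank_range, Subspace.dual_finrank_eq] at hdual
  lia

theorem dualMap_pow {R M : Type*} [CommSemiring R] [AddCommMonoid M] [Module R M]
    (f : End R M) (t : ℕ) : f.dualMap ^ t = (f ^ t).dualMap := by
  induction t with
  | zero => rfl
  | succ t ih =>
    rw [pow_succ, ih, pow_succ', End.mul_eq_comp, End.mul_eq_comp, dualMap_comp_dualMap]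

namespace HasJordanType

variable {N : End k V} {M : End k W} {s r : Multiset ℕ}

theorem sum_eq_finrank (h : HasJordanType N s) : s.sum = finrank k V := by
  obtain ⟨n, hn⟩ := h.isNilpotent
  have hker := h.finrank_ker_pow (n + s.sum)
  have hmin : s.map (fun p => min (n + s.sum) p) = s.map id :=
    Multiset.map_congr rfl fun p hp =>
      min_eq_right ((Multiset.le_sum_of_mem hp).trans (Nat.le_add_left _ _))
  rw [pow_add, hn, zero_mul, ker_zero, finrank_top, hmin, Multiset.map_id] at hker
  exact hker.symm

theorem conj (h : HasJordanType N s) (e : V ≃ₗ[k] W) :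
    HasJordanType (e.conjRingEquiv N) s where
  isNilpotent := h.isNilpotent.map e.conjRingEquiv
  finrank_ker_pow t := by
    have hker : ker (e.conjRingEquiv (N ^ t)) = (ker (N ^ t)).map (e : V →ₗ[k] W) := by
      ext x
      simp [Submodule.mem_map_equiv, -map_pow]
    rw [← map_pow, hker, LinearEquiv.finrank_map_eq, h.finrank_ker_pow]

theorem prodMap [FiniteDimensional k V] [FiniteDimensional k W]
    (hN : HasJordanType N s) (hM : HasJordanType M r) :
    HasJordanType (N.prodMap M) (s + r) := by
  have hpow (t : ℕ) : (N.prodMap M : End k (V × W)) ^ t = (N ^ t).prodMap (M ^ t) :=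
    (map_pow (prodMapRingHom k V W) (N, M) t).symm
  refine ⟨?_, fun t => ?_⟩
  · obtain ⟨n, hn⟩ := hN.isNilpotent
    obtain ⟨m, hm⟩ := hM.isNilpotent
    refine ⟨n + m, ?_⟩
    rw [hpow, pow_add, hn, zero_mul, pow_add, hm, mul_zero, prodMap_zero]
  · rw [hpow, ker_prodMap, finrank_submodule_prod, hN.finrank_ker_pow, hM.finrank_ker_pow,
      Multiset.map_add, Multiset.sum_add]

theorem neg (h : HasJordanType N s) : HasJordanType (-N) s where
  isNilpotent := h.isNilpotent.neg
  finrank_ker_pow t := by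
    rw [← h.finrank_ker_pow]
    obtain ht | ht := t.even_or_odd
    · rw [ht.neg_pow]
    · rw [ht.neg_pow, ker_neg]

theorem dualMap [FiniteDimensional k V] (h : HasJordanType N s) :
    HasJordanType (V := Dual k V) N.dualMap s where
  isNilpotent := by
    obtain ⟨n, hn⟩ := h.isNilpotent
    exact ⟨n, by rw [dualMap_pow, hn, dualMap_def, map_zero]⟩
  finrank_ker_pow t := by rw [dualMap_pow, finrank_ker_dualMap, h.finrank_ker_pow]

theorem zero [Subsingleton V] : HasJordanType (0 : End k V) 0 where
  isNilpotent := IsNilpotent.zero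
  finrank_ker_pow _ := finrank_zero_of_subsingleton

end HasJordanType

end HasJordanType

section JordanBlock

variable (R k : Type*) [CommRing R] [Field k] (m : ℕ)

/-- The nilpotent Jordan block of size `m`, shifting coordinates down by one index. -/
def jordanBlock : End R (Fin m → R) :=
  LinearMap.pi fun i => if h : (i : ℕ) + 1 < m then proj ⟨i + 1, h⟩ else 0

variable {R m}

theorem jordanBlock_apply (x : Fin m → R) (i : Fin m) :
    jordanBlock R m x i = if h : (i : ℕ) + 1 < m then x ⟨i + 1, h⟩ else 0 := by
  rw [jordanBlock, pi_apply]
  split <;> rfl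

theorem jordanBlock_pow_apply (t : ℕ) (x : Fin m → R) (i : Fin m) :
    (jordanBlock R m ^ t) x i = if h : (i : ℕ) + t < m then x ⟨i + t, h⟩ else 0 := by
  induction t generalizing i with
  | zero => simp
  | succ t ih =>
    rw [pow_succ', End.mul_apply, jordanBlock_apply]
    by_cases h : (i : ℕ) + 1 < m
    · simp only [dif_pos h, ih, add_assoc, add_comm 1 t]
    · rw [dif_neg h, dif_neg (by lia)]

theorem mem_ker_jordanBlock_pow {t : ℕ} {x : Fin m → R} :
    x ∈ ker (jordanBlock R m ^ t) ↔ ∀ i : Fin m, t ≤ i → x i = 0 := by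
  refine ⟨fun hx i hi => ?_, fun hx => funext fun i => ?_⟩
  · have hcoord := congrFun hx ⟨i - t, by lia⟩
    simpa [jordanBlock_pow_apply, Nat.sub_add_cancel hi] using hcoord
  · rw [jordanBlock_pow_apply]
    split
    · exact hx _ (Nat.le_add_left t i)
    · rfl

variable (m)

theorem finrank_ker_jordanBlock_pow (t : ℕ) :
    finrank k (ker (jordanBlock k m ^ t)) = min t m := by
  let I : Set (Fin m) := {i | (i : ℕ) < t}
  have hker : ker (jordanBlock k m ^ t) =
      ⨅ i ∈ Iᶜ, ker (proj (R := k) (φ := fun _ : Fin m => k) i) := by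
    ext x
    rw [mem_ker_jordanBlock_pow]
    simp [I]
  have hcard : Fintype.card I = min m t := by
    rw [← Fin.card_filter_val_lt]
    exact Fintype.card_subtype _
  rw [hker, (iInfKerProjEquiv k (fun _ => k) disjoint_compl_right
    (Set.union_compl_self I).ge).finrank_eq, finrank_pi, hcard, min_comm]

theorem hasJordanType_jordanBlock : HasJordanType (jordanBlock k m) {m} where
  isNilpotent := by
    refine ⟨m, LinearMap.ext fun x => funext fun i => ?_⟩
    rw [jordanBlock_pow_apply, dif_neg (by lia)]
    rfl
  finrank_ker_pow t := by rw [finrank_ker_jordanBlock_pow, Multiset.map_singleton,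
    Multiset.sum_singleton]

end JordanBlock

theorem exists_hasJordanType.{u} (k : Type u) [Field k] (s : Multiset ℕ) :
    ∃ (V : Type u) (_ : AddCommGroup V) (_ : Module k V) (_ : FiniteDimensional k V)
      (N : End k V), HasJordanType N s := by
  induction s using Multiset.induction with
  | empty => exact ⟨PUnit, inferInstance, inferInstance, inferInstance, 0, .zero⟩
  | cons p s ih =>
    obtain ⟨V, _, _, _, N, hN⟩ := ih
    exact ⟨(Fin p → k) × V, inferInstance, inferInstance, inferInstance,
      (jordanBlock k p).prodMap N, (hasJordanType_jordanBlock k p).prodMap hN⟩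

section OrthogonalSum

variable {R V W V' W' : Type*} [CommRing R] [AddCommGroup V] [Module R V] [AddCommGroup W]
  [Module R W] [AddCommGroup V'] [Module R V'] [AddCommGroup W'] [Module R W']

/-- The bilinear form on `V × W` restricting to `B` and `C` on the factors, which are mutually
orthogonal. -/
def orthogonalSum (B : LinearMap.BilinForm R V) (C : LinearMap.BilinForm R W) :
    LinearMap.BilinForm R (V × W) :=
  B.compl₁₂ (fst R V W) (fst R V W) + C.compl₁₂ (snd R V W) (snd R V W)

variable {B : LinearMap.BilinForm R V} {C : LinearMap.BilinForm R W}
  {B' : LinearMap.BilinForm R V'} {C' : LinearMap.BilinForm R W'}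

@[simp]
theorem orthogonalSum_apply (z w : V × W) :
    orthogonalSum B C z w = B z.1 w.1 + C z.2 w.2 := rfl

theorem orthogonalSum_isAlt (hB : B.IsAlt) (hC : C.IsAlt) : (orthogonalSum B C).IsAlt :=
  fun z => by rw [orthogonalSum_apply, hB, hC, add_zero]

theorem orthogonalSum_nondegenerate (hB : B.Nondegenerate) (hC : C.Nondegenerate) :
    (orthogonalSum B C).Nondegenerate := by
  refine ⟨fun z hz => Prod.ext ?_ ?_, fun z hz => Prod.ext ?_ ?_⟩
  · exact hB.1 z.1 fun v => by simpa using hz (v, 0)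
  · exact hC.1 z.2 fun w => by simpa using hz (0, w)
  · exact hB.2 z.1 fun v => by simpa using hz (v, 0)
  · exact hC.2 z.2 fun w => by simpa using hz (0, w)

theorem orthogonalSum_isSkewAdjoint {N : End R V} {M : End R W} (hN : B.IsSkewAdjoint N)
    (hM : C.IsSkewAdjoint M) : (orthogonalSum B C).IsSkewAdjoint (N.prodMap M) :=
  fun z w => congrArg₂ (· + ·) (hN z.1 w.1) (hM z.2 w.2)

theorem orthogonalSum_equivalent (hB : B.Equivalent B') (hC : C.Equivalent C') :
    (orthogonalSum B C).Equivalent (orthogonalSum B' C') := by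
  obtain ⟨e⟩ := hB
  obtain ⟨f⟩ := hC
  exact ⟨{ e.toLinearEquiv.prodCongr f.toLinearEquiv with
    map_app' := fun z w => congrArg₂ (· + ·) (e.map_app w.1 z.1) (f.map_app w.2 z.2) }⟩

end OrthogonalSum

section HyperbolicForm

variable (R L : Type*) [CommRing R] [AddCommGroup L] [Module R L]

/-- The alternating form `⟨(x, f), (y, g)⟩ = g x - f y` on `L × L*`. -/
def hyperbolicForm : LinearMap.BilinForm R (L × Dual R L) :=
  (Dual.eval R L).compl₁₂ (fst R L (Dual R L)) (snd R L (Dual R L)) -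
    (LinearMap.id : Dual R L →ₗ[R] L →ₗ[R] R).compl₁₂ (snd R L (Dual R L)) (fst R L (Dual R L))

variable {R L} in
@[simp]
theorem hyperbolicForm_apply (z w : L × Dual R L) :
    hyperbolicForm R L z w = w.2 z.1 - z.2 w.1 := rfl

theorem hyperbolicForm_isAlt : (hyperbolicForm R L).IsAlt := fun z => sub_self (z.2 z.1)

theorem hyperbolicForm_nondegenerate [Projective R L] : (hyperbolicForm R L).Nondegenerate := by
  refine (hyperbolicForm_isAlt R L).isRefl.nondegenerate_iff_separatingLeft.mpr
    fun z hz => Prod.ext ?_ (LinearMap.ext fun y => ?_)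
  · exact (forall_dual_apply_eq_zero_iff R z.1).mp fun g => by simpa using hz (0, g)
  · simpa using hz (y, 0)

variable {R L}

theorem hyperbolicForm_isSkewAdjoint (A : End R L) :
    (hyperbolicForm R L).IsSkewAdjoint (A.prodMap (-A.dualMap)) := fun z w => by simp

end HyperbolicForm

section Isometry

variable {R V W : Type*} [CommRing R] [AddCommGroup V] [Module R V] [AddCommGroup W] [Module R W]
  {B : LinearMap.BilinForm R V} {C : LinearMap.BilinForm R W}

theorem finrank_eq_of_equivalent (h : B.Equivalent C) : finrank R V = finrank R W :=
  h.elim fun e => e.toLinearEquiv.finrank_eq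

theorem isSkewAdjoint_conj {N : End R V} (hN : B.IsSkewAdjoint N) (e : B.IsometryEquiv C) :
    C.IsSkewAdjoint (e.toLinearEquiv.conjRingEquiv N) := fun x y => by
  let f := e.toLinearEquiv
  have hf (u v : V) : C (f u) (f v) = B u v := e.map_app v u
  calc
    C (f (N (f.symm x))) y = B (N (f.symm x)) (f.symm y) := by rw [← hf, f.apply_symm_apply]
    _ = B (f.symm x) (-N (f.symm y)) := hN _ _
    _ = C x (-f (N (f.symm y))) := by rw [← hf, f.apply_symm_apply, map_neg f]

theorem isometry_injective (hB : B.SeparatingLeft) (f : B →bᵢ C) : Function.Injective f :=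
  (injective_iff_map_eq_zero f).mpr fun x hx =>
    hB x fun y => by rw [← f.map_app, hx, map_zero, LinearMap.zero_apply]

end Isometry

section OrthogonalDecomposition

variable {k V W : Type*} [Field k] [AddCommGroup V] [Module k V] [AddCommGroup W] [Module k W]
  {B : LinearMap.BilinForm k V} {C : LinearMap.BilinForm k W} [FiniteDimensional k W]

theorem isCompl_range_orthogonal (hB : B.SeparatingRight) (hC : C.IsRefl) (f : B →bᵢ C) :
    IsCompl (range f.toLinearMap) (C.orthogonal (range f.toLinearMap)) := by
  rw [BilinForm.isCompl_orthogonal_iff_disjoint hC, Submodule.disjoint_def]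
  rintro _ ⟨x, rfl⟩ hx
  have hx0 : x = 0 := hB x fun y => by
    rw [← f.map_app]
    exact hx _ ⟨y, rfl⟩
  rw [hx0, map_zero]

theorem equivalent_orthogonalSum_orthogonal (hB : B.Nondegenerate) (hC : C.IsRefl) (f : B →bᵢ C) :
    (orthogonalSum B (C.restrict (C.orthogonal (range f.toLinearMap)))).Equivalent C := by
  let P := range f.toLinearMap
  let e : (V × C.orthogonal P) ≃ₗ[k] W :=
    ((LinearEquiv.ofInjective f.toLinearMap (isometry_injective hB.1 f)).prodCongr
      (LinearEquiv.refl k _)).trans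
      (Submodule.prodEquivOfIsCompl P _ (isCompl_range_orthogonal hB.2 hC f))
  refine ⟨{ e with map_app' := fun z w => ?_ }⟩
  have hortho (v : V) (u : C.orthogonal P) : C (f v) u = 0 := u.2 _ ⟨v, rfl⟩
  have hortho' (u : C.orthogonal P) (v : V) : C u (f v) = 0 := hC _ _ (hortho v u)
  have he (z : V × C.orthogonal P) : e z = f z.1 + z.2 := rfl
  change C (e z) (e w) = _
  simp [he, hortho, hortho']

theorem restrict_orthogonal_nondegenerate (hB : B.SeparatingRight) (hC : C.Nondegenerate)
    (hrefl : C.IsRefl) (f : B →bᵢ C) :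
    (C.restrict (C.orthogonal (range f.toLinearMap))).Nondegenerate := by
  rw [BilinForm.restrict_nondegenerate_iff_isCompl_orthogonal hrefl,
    BilinForm.orthogonal_orthogonal hC hrefl]
  exact (isCompl_range_orthogonal hB hrefl f).symm

end OrthogonalDecomposition

section SymplecticClassification

variable {k V W : Type*} [Field k] [AddCommGroup V] [Module k V] [AddCommGroup W] [Module k W]
  {B : LinearMap.BilinForm k V} {C : LinearMap.BilinForm k W}

theorem exists_apply_eq_one [Nontrivial V] (hB : B.SeparatingLeft) : ∃ x y, B x y = 1 := by
  obtain ⟨x, hx⟩ := exists_ne (0 : V)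
  obtain ⟨y, hy⟩ : ∃ y, B x y ≠ 0 := by
    by_contra! h
    exact hx (hB x h)
  exact ⟨x, (B x y)⁻¹ • y, by simp [hy]⟩

theorem exists_isometry_hyperbolicForm [Nontrivial V] (hB : B.SeparatingLeft) (halt : B.IsAlt) :
    Nonempty (hyperbolicForm k k →bᵢ B) := by
  obtain ⟨x, y, hxy⟩ := exists_apply_eq_one hB
  have hyx : B y x = -1 := by rw [← halt.neg_eq, hxy]
  let f : k × Dual k k →ₗ[k] V :=
    (toSpanSingleton k V x).coprod (toSpanSingleton k V y ∘ₗ applyₗ 1)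
  refine ⟨{ f with map_app' := fun z w => ?_ }⟩
  have hdual (g : Dual k k) (a : k) : g a = a * g 1 := by
    rw [← smul_eq_mul, ← map_smul, smul_eq_mul, mul_one]
  change B (f z) (f w) = _
  simp [f, hxy, hyx, halt.self_eq_zero, hdual _ z.1, sub_eq_add_neg]

theorem exists_equivalent_hyperbolicForm_orthogonalSum [FiniteDimensional k V] [Nontrivial V]
    (hB : B.Nondegenerate) (halt : B.IsAlt) :
    ∃ U : Submodule k V, (B.restrict U).Nondegenerate ∧
      (orthogonalSum (hyperbolicForm k k) (B.restrict U)).Equivalent B := by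
  obtain ⟨f⟩ := exists_isometry_hyperbolicForm hB.1 halt
  have hplane := hyperbolicForm_nondegenerate k k
  exact ⟨_, restrict_orthogonal_nondegenerate hplane.2 hB halt.isRefl f,
    equivalent_orthogonalSum_orthogonal hplane halt.isRefl f⟩

theorem equivalent_of_isAlt [FiniteDimensional k V] [FiniteDimensional k W]
    (hB : B.Nondegenerate) (hBalt : B.IsAlt) (hC : C.Nondegenerate) (hCalt : C.IsAlt)
    (hdim : finrank k V = finrank k W) : B.Equivalent C := by
  induction hd : finrank k V using Nat.strong_induction_on generalizing V W with
  | _ d ih =>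
    subst hd
    obtain hV | hV := subsingleton_or_nontrivial V
    · exact ⟨{ LinearEquiv.ofFinrankEq V W hdim with
        map_app' := fun x y => by simp [Subsingleton.elim x 0] }⟩
    have hW : Nontrivial W := nontrivial_of_finrank_pos (hdim ▸ finrank_pos)
    obtain ⟨U, hU, hUV⟩ := exists_equivalent_hyperbolicForm_orthogonalSum hB hBalt
    obtain ⟨U', hU', hUW⟩ := exists_equivalent_hyperbolicForm_orthogonalSum hC hCalt
    have hdimV := finrank_eq_of_equivalent hUV
    have hdimW := finrank_eq_of_equivalent hUW
    rw [finrank_prod, finrank_prod, finrank_self] at hdimV hdimW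
    have hUU' : (B.restrict U).Equivalent (C.restrict U') :=
      ih (finrank k U) (by lia) hU (fun x => hBalt x) hU' (fun x => hCalt x) (by lia) rfl
    exact hUV.symm.trans ((orthogonalSum_equivalent (.refl _) hUU').trans hUW)

end SymplecticClassification

section AntidiagonalForm

variable (R : Type*) [CommRing R] (m : ℕ)

/-- The form `⟨x, y⟩ = ∑ i, (-1)ⁱ xᵢ yₘ₋₁₋ᵢ` on `Rᵐ`, for which the Jordan block is skew-adjoint. -/
def antidiagonalForm : LinearMap.BilinForm R (Fin m → R) :=
  ∑ i : Fin m, (-1 : R) ^ (i : ℕ) • BilinForm.linMulLin (proj i) (proj i.rev)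

variable {R m}

theorem antidiagonalForm_apply (x y : Fin m → R) :
    antidiagonalForm R m x y = ∑ i : Fin m, (-1) ^ (i : ℕ) * (x i * y i.rev) := by
  simp [antidiagonalForm]

theorem antidiagonalForm_isAlt (hm : Even m) : (antidiagonalForm R m).IsAlt := fun x => by
  rw [antidiagonalForm_apply]
  have hsum (i : Fin m) : (i : ℕ) + i.rev + 1 = m := by rw [Fin.val_rev]; lia
  have hsign (i : Fin m) : (-1 : R) ^ (i.rev : ℕ) = -(-1) ^ (i : ℕ) := by
    obtain hi | hi := (i : ℕ).even_or_odd
    · have hrev : Odd (i.rev : ℕ) := by grind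
      rw [hi.neg_one_pow, hrev.neg_one_pow]
    · have hrev : Even (i.rev : ℕ) := by grind
      rw [hi.neg_one_pow, hrev.neg_one_pow, neg_neg]
  refine Finset.sum_involution (fun i _ => i.rev) (fun i _ => ?_) (fun i _ _ hi => ?_)
    (fun _ _ => Finset.mem_univ _) (fun i _ => i.rev_rev)
  · rw [hsign, Fin.rev_rev]
    ring
  · grind

theorem antidiagonalForm_separatingLeft : (antidiagonalForm R m).SeparatingLeft := by
  refine fun x hx => funext fun i => ?_
  have hcoord : (-1) ^ (i : ℕ) * x i = 0 := by
    simpa [antidiagonalForm_apply, Pi.single_apply, Fin.rev_inj] using hx (Pi.single i.rev 1)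
  exact ((isUnit_one.neg.pow i).mul_right_eq_zero).mp hcoord

theorem antidiagonalForm_isSkewAdjoint_jordanBlock :
    (antidiagonalForm R m).IsSkewAdjoint (jordanBlock R m) := fun x y => by
  obtain _ | m := m
  · simp [antidiagonalForm_apply]
  have hlast (z : Fin (m + 1) → R) : jordanBlock R (m + 1) z (Fin.last m) = 0 := by
    simp [jordanBlock_apply]
  have hx_castSucc (i : Fin m) : jordanBlock R (m + 1) x i.castSucc = x i.succ := by
    simp [jordanBlock_apply, Fin.succ]
  have hy_rev (i : Fin m) : jordanBlock R (m + 1) y i.succ.rev = y i.castSucc.rev := by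
    rw [Fin.rev_succ, Fin.rev_castSucc]
    simp [jordanBlock_apply, Fin.succ, i.pos]
  simp only [antidiagonalForm_apply, Pi.neg_apply]
  rw [Fin.sum_univ_castSucc, Fin.sum_univ_succ]
  simp [hlast, hx_castSucc, hy_rev, pow_succ]

end AntidiagonalForm

/-- Some symplectic space over `k` carries a skew-adjoint nilpotent endomorphism of Jordan
type `s`. -/
def IsSymplecticJordanType.{u} (k : Type u) [Field k] (s : Multiset ℕ) : Prop :=
  ∃ (V : Type u) (_ : AddCommGroup V) (_ : Module k V) (_ : FiniteDimensional k V)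
    (B : LinearMap.BilinForm k V) (N : End k V),
    B.Nondegenerate ∧ B.IsAlt ∧ B.IsSkewAdjoint N ∧ HasJordanType N s

namespace IsSymplecticJordanType

variable (k : Type*) [Field k]

theorem zero : IsSymplecticJordanType k 0 :=
  ⟨PUnit, inferInstance, inferInstance, inferInstance, 0, 0,
    ⟨fun _ _ => rfl, fun _ _ => rfl⟩, fun _ => rfl, fun _ _ => rfl, .zero⟩

variable {k} in
theorem add {s r : Multiset ℕ} (hs : IsSymplecticJordanType k s)
    (hr : IsSymplecticJordanType k r) : IsSymplecticJordanType k (s + r) := by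
  obtain ⟨V, _, _, _, B, N, hB, hBalt, hN, hNs⟩ := hs
  obtain ⟨W, _, _, _, C, M, hC, hCalt, hM, hMr⟩ := hr
  exact ⟨V × W, inferInstance, inferInstance, inferInstance, orthogonalSum B C, N.prodMap M,
    orthogonalSum_nondegenerate hB hC, orthogonalSum_isAlt hBalt hCalt,
    orthogonalSum_isSkewAdjoint hN hM, hNs.prodMap hMr⟩

theorem double (s : Multiset ℕ) : IsSymplecticJordanType k (s + s) := by
  obtain ⟨L, _, _, _, A, hA⟩ := exists_hasJordanType k s
  exact ⟨L × Dual k L, inferInstance, inferInstance, inferInstance, hyperbolicForm k L,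
    A.prodMap (-A.dualMap), hyperbolicForm_nondegenerate k L, hyperbolicForm_isAlt k L,
    hyperbolicForm_isSkewAdjoint A, hA.prodMap hA.dualMap.neg⟩

theorem singleton {p : ℕ} (hp : Even p) : IsSymplecticJordanType k {p} :=
  have halt := antidiagonalForm_isAlt (R := k) hp
  ⟨Fin p → k, inferInstance, inferInstance, inferInstance, antidiagonalForm k p, jordanBlock k p,
    halt.isRefl.nondegenerate_iff_separatingLeft.mpr antidiagonalForm_separatingLeft, halt,
    antidiagonalForm_isSkewAdjoint_jordanBlock, hasJordanType_jordanBlock k p⟩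

theorem of_forall_even {s : Multiset ℕ} (hs : ∀ p ∈ s, Even p) : IsSymplecticJordanType k s := by
  induction s using Multiset.induction with
  | empty => exact zero k
  | cons p s ih =>
    rw [Multiset.forall_mem_cons] at hs
    exact (singleton k hs.1).add (ih hs.2)

theorem of_even_count_odd {s : Multiset ℕ} (hs : ∀ j, Odd j → Even (s.count j)) :
    IsSymplecticJordanType k s := by
  obtain ⟨o, ho⟩ : ∃ o, s.filter Odd = 2 • o :=
    Multiset.exists_smul_of_dvd_count _ fun j hj => by
      have hj_odd : Odd j := Multiset.of_mem_filter hj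
      rw [Multiset.count_filter_of_pos hj_odd]
      exact (hs j hj_odd).two_dvd
  have heven : ∀ p ∈ s.filter (fun p => ¬ Odd p), Even p := fun p hp =>
    Nat.not_odd_iff_even.mp (Multiset.mem_filter.mp hp).2
  rw [← Multiset.filter_add_not Odd s, ho, two_nsmul]
  exact (double k o).add (of_forall_even k heven)

end IsSymplecticJordanType

theorem stmt4_general {k V : Type*} [Field k] [AddCommGroup V] [Module k V] [FiniteDimensional k V]
    {B : LinearMap.BilinForm k V} (hB : B.SeparatingLeft) (halt : B.IsAlt)
    {s : Multiset ℕ} (hsum : s.sum = finrank k V) (hs : ∀ j, Odd j → Even (s.count j)) :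
    ∃ N : End k V, B.IsSkewAdjoint N ∧ HasJordanType N s := by
  obtain ⟨W, _, _, _, C, M, hC, hCalt, hM, hMs⟩ :=
    IsSymplecticJordanType.of_even_count_odd k hs
  have hdim : finrank k W = finrank k V := hMs.sum_eq_finrank.symm.trans hsum
  have hBnd : B.Nondegenerate := halt.isRefl.nondegenerate_iff_separatingLeft.mpr hB
  obtain ⟨e⟩ := equivalent_of_isAlt hC hCalt hBnd halt hdim
  exact ⟨e.toLinearEquiv.conjRingEquiv M, isSkewAdjoint_conj hM e, hMs.conj e.toLinearEquiv⟩

/-- Every partition of `2n` whose odd parts have even multiplicity is the Jordan type of a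
skew-adjoint nilpotent endomorphism of a `2n`-dimensional symplectic space (char ≠ 2). -/
theorem stmt4 (k : Type*) [Field k] (hchar : (2 : k) ≠ 0)
    (V : Type*) [AddCommGroup V] [Module k V] [FiniteDimensional k V]
    (n : ℕ) (hdim : Module.finrank k V = 2 * n)
    (B : V →ₗ[k] V →ₗ[k] k)
    (hBnd : ∀ x : V, (∀ y : V, B x y = 0) → x = 0)
    (halt : ∀ x : V, B x x = 0)
    (lam : Nat.Partition (2 * n))
    (hlam : ∀ j : ℕ, Odd j → Even (Multiset.count j lam.parts)) :
    ∃ N : Module.End k V,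
      (∀ x y : V, B (N x) y = - B x (N y)) ∧
      IsNilpotent N ∧
      ∀ t : ℕ, Module.finrank k ↥(LinearMap.ker (N ^ t)) =
        (lam.parts.map fun p => min t p).sum := by
  obtain ⟨N, hskew, hN⟩ := stmt4_general hBnd halt (lam.parts_sum.trans hdim.symm) hlam
  exact ⟨N, fun x y => (hskew x y).trans (map_neg _ _), hN.isNilpotent, hN.finrank_ker_pow⟩
end

section
/- Let k be an algebraically closed field with char k ≠ 2 and let V be a finite-dimensional k-vector space with a nondegenerate alternating bilinear form ⟨·,·⟩. If N and N' are skew-adjoint nilpotent endomorphisms of V with the same Jordan type, i.e., dim ker(N^t) = dim ker(N'^t) for all t ≥ 0, then there exists a linear automorphism g of V with ⟨g x, g y⟩ = ⟨x, y⟩ for all x, y ∈ V and g ∘ N ∘ g^{−1} = N'. -/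
/-!
A nilpotent endomorphism is determined up to similarity by the ranks of its powers: an intertwining
equivalence between the ranges of `N` and `N'` extends to the whole spaces, and one inducts on the
nilpotency index. Given any equivalence `g` with `g N = N' g`, the form `⟨g x, g y⟩` can be written
as `⟨S x, y⟩`, where `S` is invertible, self-adjoint and commutes with `N`. A square root `R` of `S`
inside `k[S]` is again self-adjoint and commutes with `N`, so that `⟨g x, g y⟩ = ⟨R x, R y⟩` and
`g R⁻¹` is an isometry conjugating `N` to `N'`. The square root is lifted from the residue fields of
the Artinian ring `k[S]` by the Chinese remainder theorem and Newton's method.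
-/

section SquareRoot

open Polynomial in
theorem isSquare_of_isNilpotent_sq_sub {R : Type*} [CommRing R] (h2 : IsUnit (2 : R)) {u x : R}
    (hu : IsUnit u) (hx : IsNilpotent (x ^ 2 - u)) : IsSquare u := by
  have hx_unit : IsUnit x := by
    have hx_sq : IsUnit (x ^ 2) := by
      simpa using hx.isUnit_add_right_of_commute hu (Commute.all _ _)
    exact (isUnit_pow_iff two_ne_zero).1 hx_sq
  obtain ⟨r, ⟨-, hr⟩, -⟩ := existsUnique_nilpotent_sub_and_aeval_eq_zero
    (P := X ^ 2 - C u) (x := x) (by simpa using hx)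
    (by simpa [one_add_one_eq_two] using h2.mul hx_unit)
  exact ⟨r, by simpa [sub_eq_zero, sq, eq_comm] using hr⟩

theorem isSquare_of_forall_isMaximal_isSquare_mk {R : Type*} [CommRing R] [IsArtinianRing R]
    (h2 : IsUnit (2 : R)) {u : R} (hu : IsUnit u)
    (h : ∀ m : Ideal R, m.IsMaximal → IsSquare (Ideal.Quotient.mk m u)) : IsSquare u := by
  choose y hy using fun m : MaximalSpectrum R => h m.asIdeal m.isMaximal
  have hcoprime : Pairwise (Function.onFun IsCoprime (MaximalSpectrum.asIdeal (R := R))) :=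
    fun m n hmn => Ideal.isCoprime_of_isMaximal (MaximalSpectrum.ext_iff.not.1 hmn)
  obtain ⟨x, hx⟩ := Ideal.pi_quotient_surjective hcoprime y
  refine isSquare_of_isNilpotent_sq_sub h2 hu (x := x) ?_
  rw [← mem_nilradical, nilradical_eq_sInf, Submodule.mem_sInf]
  intro p hp
  let m : MaximalSpectrum R := ⟨p, IsArtinianRing.isPrime_iff_isMaximal p |>.1 hp⟩
  rw [← Ideal.Quotient.eq, map_pow, sq]
  exact (congrArg₂ (· * ·) (hx m) (hx m)).trans (hy m).symm

variable {k : Type*} [Field k] [IsSepClosed k] [NeZero (2 : k)]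

theorem isSquare_of_isUnit_of_isSepClosed {A : Type*} [CommRing A] [Algebra k A]
    [Module.Finite k A] {u : A} (hu : IsUnit u) : IsSquare u := by
  have : IsArtinianRing A := isArtinian_of_tower k inferInstance
  have h2 : IsUnit (2 : A) := by
    simpa only [map_ofNat] using (IsUnit.mk0 (2 : k) two_ne_zero).map (algebraMap k A)
  refine isSquare_of_forall_isMaximal_isSquare_mk h2 hu fun m _ => ?_
  let := Ideal.Quotient.field m
  have : IsSepClosed (A ⧸ m) := Algebra.IsAlgebraic.isSepClosed (F := k)
  have : NeZero (2 : A ⧸ m) := ⟨(h2.map (Ideal.Quotient.mk m)).ne_zero⟩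
  exact IsSepClosed.exists_eq_mul_self _

open scoped IsMulCommutative nonZeroDivisors in
theorem exists_mem_adjoin_singleton_mul_self_eq {A : Type*} [Ring A] [Algebra k A] {a : A}
    (ha : IsUnit a) (ha_int : IsIntegral k a) : ∃ b ∈ Algebra.adjoin k {a}, b * b = a := by
  let a' : Algebra.adjoin k {a} := ⟨a, Algebra.self_mem_adjoin_singleton k a⟩
  have : Module.Finite k (Algebra.adjoin k {a}) := Algebra.finite_adjoin_simple_of_isIntegral ha_int
  have ha' : IsUnit a' := by
    have : IsArtinianRing (Algebra.adjoin k {a}) := isArtinian_of_tower k inferInstance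
    refine IsArtinianRing.isUnit_of_mem_nonZeroDivisors ?_
    exact comap_nonZeroDivisors_le_of_injective (f := (Algebra.adjoin k {a}).subtype)
      Subtype.val_injective ha.mem_nonZeroDivisors
  obtain ⟨b, hb⟩ := isSquare_of_isUnit_of_isSepClosed (k := k) ha'
  exact ⟨b, b.2, (congrArg Subtype.val hb).symm⟩

end SquareRoot

section Isometry

open LinearMap

theorem isSelfAdjoint_of_mem_adjoin_singleton {R M : Type*} [CommRing R] [AddCommGroup M]
    [Module R M] {B : M →ₗ[R] M →ₗ[R] R} {S T : Module.End R M} (hS : B.IsSelfAdjoint S)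
    (hT : T ∈ Algebra.adjoin R {S}) : B.IsSelfAdjoint T := by
  induction hT using Algebra.adjoin_induction with
  | mem T hT => rwa [Set.mem_singleton_iff.1 hT]
  | algebraMap c => exact fun x y => by simp
  | add T₁ T₂ _ _ h₁ h₂ => exact h₁.add h₂
  | mul T₁ T₂ hT₁ hT₂ h₁ h₂ =>
    have hcomm : T₁ * T₂ = T₂ * T₁ := setLike_mul_comm hT₁ hT₂
    have hmul : IsAdjointPair B B (T₁ * T₂) (T₂ * T₁) := IsAdjointPair.mul h₁ h₂
    rwa [← hcomm] at hmul

variable {k V V' : Type*} [Field k] [AddCommGroup V] [Module k V] [AddCommGroup V'] [Module k V']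
  [FiniteDimensional k V]

theorem exists_isUnit_isSelfAdjoint_forall_apply_eq {B C : V →ₗ[k] V →ₗ[k] k}
    (hB : B.SeparatingLeft) (hC : C.SeparatingLeft) {ε : k} (hBε : ∀ x y, B x y = ε * B y x)
    (hCε : ∀ x y, C x y = ε * C y x) :
    ∃ S : Module.End k V, IsUnit S ∧ B.IsSelfAdjoint S ∧ ∀ x y, B (S x) y = C x y := by
  have hBnd : BilinForm.Nondegenerate B := .ofSeparatingLeft hB
  have hS (x y : V) : B (BilinForm.symmCompOfNondegenerate C B hBnd x) y = C x y :=
    BilinForm.symmCompOfNondegenerate_left_apply C hBnd y x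
  refine ⟨BilinForm.symmCompOfNondegenerate C B hBnd, ?_, fun x y => ?_, hS⟩
  · rw [LinearMap.isUnit_iff_ker_eq_bot, LinearMap.ker_eq_bot']
    exact fun x hx => hC x fun y => by rw [← hS, hx, map_zero, LinearMap.zero_apply]
  · rw [hS, hCε, hBε x, hS]

theorem exists_isometry_of_intertwines_adjointPair [IsSepClosed k] [NeZero (2 : k)]
    {B : V →ₗ[k] V →ₗ[k] k} {B' : V' →ₗ[k] V' →ₗ[k] k} (hB : B.SeparatingLeft)
    (hB' : B'.SeparatingLeft) {ε : k} (hε : ∀ x y, B x y = ε * B y x)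
    (hε' : ∀ x y, B' x y = ε * B' y x) {N M : Module.End k V} {N' M' : Module.End k V'}
    (hNM : IsAdjointPair B B N M) (hNM' : IsAdjointPair B' B' N' M') (g : V ≃ₗ[k] V')
    (hgN : ∀ x, g (N x) = N' (g x)) (hgM : ∀ x, g (M x) = M' (g x)) :
    ∃ h : V ≃ₗ[k] V', (∀ x y, B' (h x) (h y) = B x y) ∧ ∀ x, h (N x) = N' (h x) := by
  have hC : (B'.compl₁₂ g.toLinearMap g.toLinearMap).SeparatingLeft := fun x hx =>
    g.map_eq_zero_iff.1 <| hB' _ fun y => by simpa using hx (g.symm y)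
  obtain ⟨S, hS_unit, hS_selfAdjoint, hS⟩ := exists_isUnit_isSelfAdjoint_forall_apply_eq hB hC hε
    fun x y => hε' (g x) (g y)
  simp only [compl₁₂_apply, LinearEquiv.coe_coe] at hS
  have hS_comm : Commute N S := LinearMap.ext fun x =>
    LinearMap.ker_eq_bot.1 (separatingLeft_iff_ker_eq_bot.1 hB) <| LinearMap.ext fun y => by
      simp only [Module.End.mul_apply]
      rw [hNM, hS, hS, hgN, hgM, hNM']
  obtain ⟨R, hR_mem, hRR⟩ := exists_mem_adjoin_singleton_mul_self_eq hS_unit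
    (Algebra.IsIntegral.isIntegral (R := k) S)
  have hR_selfAdjoint := isSelfAdjoint_of_mem_adjoin_singleton hS_selfAdjoint hR_mem
  have hR_comm : Commute N R :=
    Algebra.commute_of_mem_adjoin_of_forall_mem_commute hR_mem (by simpa using hS_comm)
  let e : V ≃ₗ[k] V := LinearMap.GeneralLinearGroup.toLinearEquiv
    (isUnit_of_mul_isUnit_left (hRR ▸ hS_unit)).unit
  have he (x : V) : R (e.symm x) = x := e.apply_symm_apply x
  have he_comm (x : V) : e.symm (N x) = N (e.symm x) := by
    rw [LinearEquiv.symm_apply_eq]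
    exact (congrArg N (he x)).symm.trans (LinearMap.congr_fun hR_comm (e.symm x))
  refine ⟨e.symm ≪≫ₗ g, fun x y => ?_, fun x => ?_⟩
  · calc B' (g (e.symm x)) (g (e.symm y))
        = B (S (e.symm x)) (e.symm y) := (hS _ _).symm
      _ = B (R (R (e.symm x))) (e.symm y) := by rw [← Module.End.mul_apply, hRR]
      _ = B (R (e.symm x)) (R (e.symm y)) := hR_selfAdjoint _ _
      _ = B x y := by rw [he, he]
  · simp only [LinearEquiv.trans_apply]
    rw [he_comm, hgN]

end Isometry

section Similarity

theorem exists_extend_of_eq_on_inter {K V W : Type*} [DivisionRing K] [AddCommGroup V] [Module K V]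
    [AddCommGroup W] [Module K W] {P Q : Submodule K V} (f : P →ₗ[K] W) (g : Q →ₗ[K] W)
    (hfg : ∀ (x : P) (y : Q), (x : V) = y → f x = g y) :
    ∃ F : V →ₗ[K] W, (∀ x : P, F x = f x) ∧ ∀ y : Q, F y = g y := by
  let f' : V →ₗ.[K] W := ⟨P, f⟩
  let g' : V →ₗ.[K] W := ⟨Q, g⟩
  obtain ⟨F, hF⟩ := LinearMap.exists_extend (f'.sup g' hfg).toFun
  have hf := f'.left_le_sup g' hfg
  have hg := f'.right_le_sup g' hfg
  exact ⟨F, fun x => (LinearMap.congr_fun hF ⟨x, hf.1 x.2⟩).trans (hf.2 rfl).symm,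
    fun y => (LinearMap.congr_fun hF ⟨y, hg.1 y.2⟩).trans (hg.2 rfl).symm⟩

theorem exists_lift_eq_where_lifts {R M N P : Type*} [Ring R] [AddCommGroup M] [Module R M]
    [AddCommGroup N] [Module R N] [AddCommGroup P] [Module R P] [Module.Projective R P]
    {p : N →ₗ[R] P} (hp : Function.Surjective p) (f : M →ₗ[R] N) (h : M →ₗ[R] P) :
    ∃ F : M →ₗ[R] N, (∀ x, p (F x) = h x) ∧ ∀ x, p (f x) = h x → F x = f x := by
  obtain ⟨s, hs⟩ := Module.projective_lifting_property p LinearMap.id hp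
  have hs' (z : P) : p (s z) = z := LinearMap.congr_fun hs z
  exact ⟨f + s ∘ₗ (h - p ∘ₗ f), fun x => by simp [hs'], fun x hx => by simp [hx]⟩

open Module (finrank)

variable {K V V' : Type*} [DivisionRing K] [AddCommGroup V] [Module K V] [AddCommGroup V']
  [Module K V']

/-- The endomorphism of the range of `N` induced by `N`. Passing to it lowers the nilpotency index
by one. -/
def restrictRange (N : Module.End K V) : Module.End K N.range :=
  N.restrict fun x _ => N.mem_range_self x

theorem coe_restrictRange_pow_apply (N : Module.End K V) (t : ℕ) (x : N.range) :
    ((restrictRange N ^ t) x : V) = (N ^ t) x := by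
  rw [restrictRange, Module.End.pow_restrict, LinearMap.coe_restrict_apply]

theorem restrictRange_pow_eq_zero {N : Module.End K V} {n : ℕ} (hN : N ^ (n + 1) = 0) :
    restrictRange N ^ n = 0 := by
  ext ⟨_, y, rfl⟩
  rw [coe_restrictRange_pow_apply]
  exact LinearMap.congr_fun ((pow_succ N n).symm.trans hN) y

theorem finrank_range_restrictRange_pow (N : Module.End K V) (t : ℕ) :
    finrank K (restrictRange N ^ t).range = finrank K (N ^ (t + 1)).range := by
  have hcomp : N.range.subtype ∘ₗ restrictRange N ^ t = (N ^ t) ∘ₗ N.range.subtype :=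
    LinearMap.ext (coe_restrictRange_pow_apply N t)
  rw [← Submodule.finrank_map_subtype_eq, ← LinearMap.range_comp, hcomp, LinearMap.range_comp,
    Submodule.range_subtype, ← LinearMap.range_comp, pow_succ, Module.End.mul_eq_comp]

variable [FiniteDimensional K V] [FiniteDimensional K V']

theorem exists_linearEquiv_extend (hdim : finrank K V = finrank K V') {P : Submodule K V}
    {f : P →ₗ[K] V'} (hf : Function.Injective f) : ∃ e : V ≃ₗ[K] V', ∀ x : P, e x = f x := by
  let e₀ : V ≃ₗ[K] V' := LinearEquiv.ofFinrankEq V V' hdim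
  obtain ⟨e, he⟩ := Submodule.exists_linearEquiv_restrict_eq
    (LinearEquiv.ofInjective (e₀.symm.toLinearMap ∘ₗ f) (e₀.symm.injective.comp hf))
  exact ⟨e ≪≫ₗ e₀, fun x => by simp [← he]⟩

theorem exists_extend_mapsTo_injOn {P Q : Submodule K V} {Q' : Submodule K V'}
    (hdim : finrank K Q = finrank K Q') {f : P →ₗ[K] V'} (hf : Function.Injective f)
    (hfQ : ∀ x : P, (x : V) ∈ Q → f x ∈ Q') :
    ∃ F : V →ₗ[K] V', (∀ x : P, F x = f x) ∧ Set.MapsTo F Q Q' ∧ Set.InjOn F Q := by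
  let ι : P.comap Q.subtype →ₗ[K] P := Q.subtype.restrict fun _ hx => hx
  have hι : Function.Injective ι := fun _ _ hxy =>
    Subtype.ext (Subtype.ext (congrArg (fun z : P => (z : V)) hxy))
  obtain ⟨e, he⟩ := exists_linearEquiv_extend hdim
    (f := (f ∘ₗ ι).codRestrict Q' fun x => hfQ (ι x) x.1.2)
    (fun _ _ hxy => hι (hf (congrArg Subtype.val hxy)))
  obtain ⟨F, hFP, hFQ⟩ := exists_extend_of_eq_on_inter f (Q'.subtype ∘ₗ e.toLinearMap)
    (by
      rintro x ⟨_, hxQ⟩ rfl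
      exact (congrArg Subtype.val (he ⟨⟨x, hxQ⟩, x.2⟩)).symm)
  refine ⟨F, hFP, fun x hx => ?_, fun x hx y hy hxy => ?_⟩
  · rw [hFQ ⟨x, hx⟩]
    exact (e ⟨x, hx⟩).2
  · have hexy : Q'.subtype (e ⟨x, hx⟩) = Q'.subtype (e ⟨y, hy⟩) :=
      (hFQ ⟨x, hx⟩).symm.trans (hxy.trans (hFQ ⟨y, hy⟩))
    exact congrArg Subtype.val (e.injective (Subtype.val_injective hexy))

theorem exists_intertwining_extend_range {N : Module.End K V} {N' : Module.End K V'}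
    (hdim : finrank K V = finrank K V') (g₀ : N.range ≃ₗ[K] N'.range)
    (hg₀ : ∀ y, g₀ (restrictRange N y) = restrictRange N' (g₀ y)) :
    ∃ g : V ≃ₗ[K] V', ∀ x, g (N x) = N' (g x) := by
  have hker : finrank K N.ker = finrank K N'.ker := by
    have h := N.finrank_range_add_finrank_ker
    have h' := N'.finrank_range_add_finrank_ker
    have := g₀.finrank_eq
    lia
  have hg₀' (y : N.range) : N'.rangeRestrict (g₀ y) = g₀ (N.rangeRestrict y) := (hg₀ y).symm
  obtain ⟨f, hf_range, hf_mapsTo, hf_injOn⟩ := exists_extend_mapsTo_injOn hker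
    (f := N'.range.subtype ∘ₗ g₀.toLinearMap) (Subtype.val_injective.comp g₀.injective)
    fun y hy => by
      have hNy : N.rangeRestrict y = 0 := Subtype.ext hy
      simpa [hNy] using congrArg Subtype.val (hg₀' y)
  obtain ⟨g, hg_lift, hg_eq⟩ := exists_lift_eq_where_lifts N'.surjective_rangeRestrict f
    (g₀.toLinearMap ∘ₗ N.rangeRestrict)
  have hg_range (y : N.range) : g y = g₀ y := by
    rw [hg_eq, hf_range]
    · rfl
    · rw [hf_range]
      exact hg₀' y
  have hg_inj : Function.Injective g := by
    rw [← LinearMap.ker_eq_bot, LinearMap.ker_eq_bot']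
    intro x hgx
    have hNx : N.rangeRestrict x = 0 := by
      have hg₀x := hg_lift x
      rw [hgx, map_zero] at hg₀x
      exact g₀.map_eq_zero_iff.1 hg₀x.symm
    have hx : x ∈ N.ker := congrArg Subtype.val hNx
    have hfx : f x = 0 := by
      rw [← hg_eq x, hgx]
      rw [LinearMap.comp_apply, hNx, map_zero]
      exact Subtype.ext (hf_mapsTo hx)
    exact hf_injOn hx N.ker.zero_mem (hfx.trans (map_zero f).symm)
  exact ⟨LinearMap.linearEquivOfInjective g hg_inj hdim, fun x =>
    (hg_range (N.rangeRestrict x)).trans (congrArg Subtype.val (hg_lift x)).symm⟩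

theorem exists_intertwining_of_finrank_range_pow_eq {N : Module.End K V} {N' : Module.End K V'}
    (hN : IsNilpotent N)
    (hrank : ∀ t, finrank K (N ^ t).range = finrank K (N' ^ t).range) :
    ∃ g : V ≃ₗ[K] V', ∀ x, g (N x) = N' (g x) := by
  obtain ⟨n, hn⟩ := hN
  have hdim : finrank K V = finrank K V' := by
    have h := hrank 0
    rwa [pow_zero, pow_zero, Module.End.one_eq_id, Module.End.one_eq_id, LinearMap.range_id,
      LinearMap.range_id, finrank_top, finrank_top] at h
  induction n generalizing V V' with
  | zero =>
    have hV : Subsingleton V := subsingleton_of_forall_eq 0 (LinearMap.congr_fun hn)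
    have hV' : Subsingleton V' := by
      rwa [← Module.finrank_zero_iff (R := K), ← hdim, Module.finrank_zero_iff]
    exact ⟨LinearEquiv.ofFinrankEq V V' hdim, fun _ => Subsingleton.elim _ _⟩
  | succ n ih =>
    obtain ⟨g₀, hg₀⟩ := ih (N := restrictRange N) (N' := restrictRange N')
      (fun t => by simp only [finrank_range_restrictRange_pow, hrank])
      (restrictRange_pow_eq_zero hn) (by have h := hrank 1; rwa [pow_one, pow_one] at h)
    exact exists_intertwining_extend_range hdim g₀ hg₀

end Similarity

theorem stmt6_general {k V V' : Type*} [Field k] [IsSepClosed k] [NeZero (2 : k)]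
    [AddCommGroup V] [Module k V] [FiniteDimensional k V]
    [AddCommGroup V'] [Module k V'] [FiniteDimensional k V']
    (hdim : Module.finrank k V = Module.finrank k V')
    {B : V →ₗ[k] V →ₗ[k] k} {B' : V' →ₗ[k] V' →ₗ[k] k}
    (hB : B.SeparatingLeft) (hB' : B'.SeparatingLeft)
    {ε η : k} (hε : ∀ x y, B x y = ε * B y x) (hε' : ∀ x y, B' x y = ε * B' y x)
    {N : Module.End k V} {N' : Module.End k V'}
    (hη : ∀ x y, B (N x) y = η * B x (N y)) (hη' : ∀ x y, B' (N' x) y = η * B' x (N' y))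
    (hnil : IsNilpotent N)
    (hjt : ∀ t, Module.finrank k (N ^ t).ker = Module.finrank k (N' ^ t).ker) :
    ∃ g : V ≃ₗ[k] V', (∀ x y, B' (g x) (g y) = B x y) ∧ ∀ x, g (N x) = N' (g x) := by
  have hrank (t : ℕ) : Module.finrank k (N ^ t).range = Module.finrank k (N' ^ t).range := by
    have h := (N ^ t).finrank_range_add_finrank_ker
    have h' := (N' ^ t).finrank_range_add_finrank_ker
    have := hjt t
    lia
  obtain ⟨g, hg⟩ := exists_intertwining_of_finrank_range_pow_eq hnil hrank
  exact exists_isometry_of_intertwines_adjointPair hB hB' hε hε'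
    (M := η • N) (M' := η • N') (fun x y => by simpa using hη x y)
    (fun x y => by simpa using hη' x y) g hg fun x => by simp [hg]

/-- Two skew-adjoint nilpotent endomorphisms of a symplectic space over an algebraically
closed field of characteristic ≠ 2 with the same Jordan type are conjugate by an element
of the symplectic group. -/
theorem stmt6 (k : Type*) [Field k] [IsAlgClosed k] (hchar : (2 : k) ≠ 0)
    (V : Type*) [AddCommGroup V] [Module k V] [FiniteDimensional k V]
    (B : V →ₗ[k] V →ₗ[k] k)
    (hBnd : ∀ x : V, (∀ y : V, B x y = 0) → x = 0)
    (halt : ∀ x : V, B x x = 0)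
    (N N' : Module.End k V)
    (hskew : ∀ x y : V, B (N x) y = - B x (N y))
    (hskew' : ∀ x y : V, B (N' x) y = - B x (N' y))
    (hnil : IsNilpotent N) (hnil' : IsNilpotent N')
    (hjt : ∀ t : ℕ, Module.finrank k ↥(LinearMap.ker (N ^ t)) =
      Module.finrank k ↥(LinearMap.ker (N' ^ t))) :
    ∃ g : V ≃ₗ[k] V,
      (∀ x y : V, B (g x) (g y) = B x y) ∧
      (∀ w : V, g (N (g.symm w)) = N' w) := by
  have : NeZero (2 : k) := ⟨hchar⟩
  have hanti (x y : V) : B x y = -1 * B y x := by rw [neg_one_mul, LinearMap.IsAlt.neg halt]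
  obtain ⟨g, hg, hgN⟩ := stmt6_general (η := -1) rfl hBnd hBnd hanti hanti
    (by simpa only [neg_one_mul] using hskew) (by simpa only [neg_one_mul] using hskew') hnil hjt
  exact ⟨g, hg, fun w => by rw [hgN, g.apply_symm_apply]⟩
end

section
/- Let k be a field, let V be a finite-dimensional k-vector space with a nondegenerate alternating bilinear form ⟨·,·⟩, let N be a skew-adjoint endomorphism of V, and let i ≥ 2 be an even integer with N^i = 0 and ker N ⊆ range(N^{i−1}). Then: (a) for all v', v'', w' ∈ V with N^{i−1} v' = N^{i−1} v'', one has ⟨v', N^{i−1} w'⟩ = ⟨v'', N^{i−1} w'⟩, so B(N^{i−1} v', N^{i−1} w') := ⟨v', N^{i−1} w'⟩ is a well-defined bilinear form B on ker N = range(N^{i−1}); (b) B is symmetric; (c) B is nondegenerate: if v ∈ ker N satisfies B(v, w) = 0 for all w ∈ ker N, then v = 0. -/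
/-!
An odd power `T` of a skew-adjoint map is again skew-adjoint. The form `(T x, T y) ↦ ⟨x, T y⟩` on
the range of `T` is studied through its pullback `(x, y) ↦ ⟨x, T y⟩ = ⟨-T x, y⟩`, which is symmetric
because the two signs, from skew-adjointness and from antisymmetry, cancel. Since `⟨·, ·⟩` is
nondegenerate, the left radical of the pullback is exactly `ker T`: one inclusion is
well-definedness of the form on the range, the other is its nondegeneracy.
-/

section AdjointPair

open LinearMap

variable {R M M₁ M₂ : Type*} [CommSemiring R] [AddCommMonoid M] [Module R M]
  [AddCommMonoid M₁] [Module R M₁] [AddCommMonoid M₂] [Module R M₂] {I : R →+* R}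

theorem isAdjointPair_pow_s9 {B : M →ₗ[R] M →ₛₗ[I] M₂} {f g : Module.End R M}
    (h : IsAdjointPair B B f g) (n : ℕ) : IsAdjointPair B B ⇑(f ^ n) ⇑(g ^ n) := by
  induction n with
  | zero => exact isAdjointPair_one
  | succ n ih =>
    rw [pow_succ f, pow_succ' g]
    exact ih.mul h

theorem ker_compl₂_of_isAdjointPair {B : M →ₗ[R] M →ₛₗ[I] M₂} {B' : M₁ →ₗ[R] M₁ →ₛₗ[I] M₂}
    {f : M →ₗ[R] M₁} {g : M₁ →ₗ[R] M} (h : IsAdjointPair B B' f g) (hB' : B'.SeparatingLeft) :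
    ker (B.compl₂ g) = ker f := by
  rw [← isAdjointPair_iff_comp_eq_compl₂.mp h]
  exact ker_comp_of_ker_eq_bot f (separatingLeft_iff_ker_eq_bot.mp hB')

end AdjointPair

section SkewAdjoint

open LinearMap

variable {R M M₁ : Type*} [CommRing R] [AddCommGroup M] [Module R M]
  [AddCommGroup M₁] [Module R M₁] {B : M →ₗ[R] M →ₗ[R] M₁} {T : Module.End R M}

theorem isSkewAdjoint_pow_of_odd (hT : B.IsSkewAdjoint T) {n : ℕ} (hn : Odd n) :
    B.IsSkewAdjoint ⇑(T ^ n) := by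
  have hadj : IsAdjointPair B B T ⇑(-T) := hT
  have hpow : IsAdjointPair B B ⇑(T ^ n) ⇑((-T) ^ n) := isAdjointPair_pow_s9 hadj n
  rwa [hn.neg_pow] at hpow

theorem neg_apply_eq_apply_of_isSkewAdjoint (hT : B.IsSkewAdjoint T) (x y : M) :
    -B (T x) y = B x (T y) := by
  rw [hT x y, Pi.neg_apply, map_neg, neg_neg]

theorem ker_compl₂_of_isSkewAdjoint (hB : B.SeparatingLeft) (hT : B.IsSkewAdjoint T) :
    ker (B.compl₂ T) = ker T := by
  have hadj : IsAdjointPair B B ⇑(-T) T := fun x y ↦ by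
    rw [LinearMap.neg_apply, map_neg₂, neg_apply_eq_apply_of_isSkewAdjoint hT]
  rw [ker_compl₂_of_isAdjointPair hadj hB, ker_neg]

theorem apply_comm_of_isAlt_of_isSkewAdjoint (hB : B.IsAlt) (hT : B.IsSkewAdjoint T) (x y : M) :
    B x (T y) = B y (T x) :=
  calc
    B x (T y) = -B (T x) y := (neg_apply_eq_apply_of_isSkewAdjoint hT x y).symm
    _ = B y (T x) := hB.neg (T x) y

theorem stmt9_general (hsep : B.SeparatingLeft) (halt : B.IsAlt) {N : Module.End R M}
    (hN : B.IsSkewAdjoint N) {n : ℕ} (hn : Odd n) :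
    (∀ v' v'' w' : M, (N ^ n) v' = (N ^ n) v'' → B v' ((N ^ n) w') = B v'' ((N ^ n) w')) ∧
    (∀ v' w' : M, B v' ((N ^ n) w') = B w' ((N ^ n) v')) ∧
    (∀ v' : M, (∀ w' : M, B v' ((N ^ n) w') = 0) → (N ^ n) v' = 0) := by
  have hskew : B.IsSkewAdjoint ⇑(N ^ n) := isSkewAdjoint_pow_of_odd hN hn
  have hker : ker (B.compl₂ (N ^ n)) = ker (N ^ n) := ker_compl₂_of_isSkewAdjoint hsep hskew
  refine ⟨fun v' v'' w' h ↦ ?_, apply_comm_of_isAlt_of_isSkewAdjoint halt hskew, fun v' h ↦ ?_⟩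
  · have hmem : v' - v'' ∈ ker (B.compl₂ (N ^ n)) := hker ▸ sub_mem_ker_iff.mpr h
    exact LinearMap.congr_fun (sub_mem_ker_iff.mp hmem) w'
  · have hmem : v' ∈ ker (B.compl₂ (N ^ n)) := LinearMap.ext h
    rwa [hker] at hmem

end SkewAdjoint

/-- In the symplectic case with `i` even, the bilinear form
`B(N^(i-1) v', N^(i-1) w') := ⟨v', N^(i-1) w'⟩` on `ker N = range N^(i-1)` is
(a) well defined, (b) symmetric, and (c) nondegenerate. -/
theorem stmt9 (k : Type*) [Field k]
    (V : Type*) [AddCommGroup V] [Module k V] [FiniteDimensional k V]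
    (B : V →ₗ[k] V →ₗ[k] k)
    (hBnd : ∀ x : V, (∀ y : V, B x y = 0) → x = 0)
    (halt : ∀ x : V, B x x = 0)
    (N : Module.End k V)
    (hskew : ∀ x y : V, B (N x) y = - B x (N y))
    (i : ℕ) (hieven : Even i) (hi : 2 ≤ i)
    (hNi : N ^ i = 0)
    (hker : LinearMap.ker N ≤ LinearMap.range (N ^ (i - 1))) :
    (∀ v' v'' w' : V, (N ^ (i - 1)) v' = (N ^ (i - 1)) v'' →
      B v' ((N ^ (i - 1)) w') = B v'' ((N ^ (i - 1)) w')) ∧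
    (∀ v' w' : V, B v' ((N ^ (i - 1)) w') = B w' ((N ^ (i - 1)) v')) ∧
    (∀ v' : V, (∀ w' : V, B v' ((N ^ (i - 1)) w') = 0) → (N ^ (i - 1)) v' = 0) :=
  stmt9_general hBnd halt (fun x y ↦ by rw [hskew, Pi.neg_apply, map_neg])
    (Nat.Even.sub_odd (by lia) hieven odd_one)
end

section
/- Let p be an odd prime, q a power of p, K an algebraically closed field of characteristic p, and let V be a finite-dimensional K-vector space with a nondegenerate alternating bilinear form ⟨·,·⟩. Let φ : V → V be an additive bijection satisfying φ(a v) = a^q φ(v) for all a ∈ K, v ∈ V and ⟨φ x, φ y⟩ = ⟨x, y⟩^q for all x, y ∈ V. Let N be a skew-adjoint nilpotent endomorphism of V with φ ∘ N = N ∘ φ, and suppose V = V₁ ⊕ V₂ ⊕ ⋯ is a direct sum of pairwise orthogonal subspaces, each stable under N and under φ, such that for every j the restriction N|_{V_j} has Jordan type (j^{m_j}), i.e., (N|_{V_j})^j = 0 and ker(N|_{V_j}) ⊆ range((N|_{V_j})^{j−1}). Fix an index i, let x ∈ ker N ∩ V_i be nonzero with φ(x) = x, and let v ∈ ker N ∩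 (⊕_{j>i} V_j) satisfy φ(v) = v. Then there exists a K-linear automorphism g of V such that ⟨g a, g b⟩ = ⟨a, b⟩ for all a, b ∈ V, g ∘ N = N ∘ g, g ∘ φ = φ ∘ g, and g(x) = x + v. -/
/-!
The infinitesimal solution is explicit. If `u` and `w` generate orthogonal `N`-cyclic subspaces,
`N ^ m u = 0` and `N ^ (m + 1) w = 0`, then `T a = ∑_{k + l = m} (-1) ^ k ⟨a, N ^ k u⟩ N ^ l w`
commutes with `N`, and subtracting its adjoint gives a nilpotent skew-adjoint `S` which still
commutes with `N` and sends a vector `x ∈ ker N` to `⟨x, u⟩ N ^ m w`. Its Cayley transform is an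
isometry sending `x` to `x + 2 ⟨x, u⟩ N ^ m w`. It remains to take `u ∈ W i` with `⟨x, u⟩ = 1` and
`w ∈ ⨁_{j > i} W j` with `N ^ i w = v / 2`, both fixed by `φ`; this is possible because `φ - 1` is
surjective on every `φ`-stable subspace (Lang's theorem for vector groups).
-/

open Finset Polynomial

/-! ### Lang's theorem for Frobenius-semilinear maps -/

section Lang

/-- The polynomials `P₀ = a₀ X ^ q - 1` and `P_{k+1} = P_k ^ q + a_{k+1} X ^ q`. The equation
`P_n(t) = t` is what remains of `φ m - m = z`, for `m = ∑_{k ≤ n} cₖ φ ^ k z`, after eliminating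
all coefficients but `t = c_n` by means of a relation `φ ^ (n+1) z = ∑_{k ≤ n} aₖ φ ^ k z`. -/
noncomputable def langPolynomial {R : Type*} [CommRing R] (q : ℕ) (a : ℕ → R) : ℕ → R[X]
  | 0 => C (a 0) * X ^ q - 1
  | k + 1 => langPolynomial q a k ^ q + C (a (k + 1)) * X ^ q

theorem derivative_langPolynomial {R : Type*} [CommRing R] {q : ℕ} (hq : (q : R) = 0)
    (a : ℕ → R) (k : ℕ) : derivative (langPolynomial q a k) = 0 := by
  cases k <;> simp [langPolynomial, derivative_pow, hq]

theorem exists_eval_langPolynomial_eq_self {K : Type*} [Field K] [IsSepClosed K] {q : ℕ}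
    (hq : (q : K) = 0) (a : ℕ → K) (n : ℕ) : ∃ t, (langPolynomial q a n).eval t = t := by
  have hderiv : derivative (langPolynomial q a n - X) = -1 := by
    simp [derivative_langPolynomial hq]
  have hsep : (langPolynomial q a n - X).Separable := by
    rw [separable_def, hderiv]
    exact isCoprime_one_right.neg_right
  have hdeg : (langPolynomial q a n - X).degree ≠ 0 := by
    intro h
    rw [eq_C_of_degree_eq_zero h, derivative_C] at hderiv
    exact one_ne_zero (neg_eq_zero.mp hderiv.symm)
  obtain ⟨t, ht⟩ := IsSepClosed.exists_root _ hdeg hsep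
  exact ⟨t, sub_eq_zero.mp (by simpa using ht)⟩

theorem exists_succ_eq_sum_range {R V : Type*} [Ring R] [AddCommGroup V] [Module R V]
    [IsNoetherian R V] (y : ℕ → V) :
    ∃ (n : ℕ) (a : ℕ → R), y (n + 1) = ∑ k ∈ range (n + 1), a k • y k := by
  let F : ℕ →o Submodule R V :=
    ⟨fun n => Submodule.span R (y '' range n), fun m n hmn =>
      Submodule.span_mono (Set.image_mono (coe_subset.mpr (range_mono hmn)))⟩
  obtain ⟨n, hn⟩ := monotone_stabilizes_iff_noetherian.mpr ‹IsNoetherian R V› F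
  have hmem : y (n + 1) ∈ F (n + 1) := by
    rw [← hn (n + 1) (by omega), hn (n + 2) (by omega)]
    exact Submodule.subset_span ⟨n + 1, by simp, rfl⟩
  obtain ⟨a, ha⟩ := (Submodule.mem_span_image_finset_iff_exists_fun' R).mp hmem
  exact ⟨n, a, ha.symm⟩

variable {K V : Type*} [Field K] [IsSepClosed K] {p e : ℕ} [Fact p.Prime] [CharP K p]
  [AddCommGroup V] [Module K V] [FiniteDimensional K V]

theorem exists_apply_sub_self_eq (he : e ≠ 0) (φ : V →ₛₗ[iterateFrobenius K p e] V) (z : V) :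
    ∃ y, φ y - y = z := by
  obtain ⟨n, a, ha⟩ := exists_succ_eq_sum_range (R := K) fun k => φ^[k] z
  obtain ⟨t, ht⟩ := exists_eval_langPolynomial_eq_self (K := K) (q := p ^ e) (by simp [he]) a n
  set c : ℕ → K := fun k => (langPolynomial (p ^ e) a k).eval t with hc
  have hcn : c n = t := ht
  have hc0 : c 0 = a 0 * t ^ p ^ e - 1 := by simp [hc, langPolynomial]
  have hcs (k : ℕ) : c (k + 1) = c k ^ p ^ e + a (k + 1) * t ^ p ^ e := by
    simp [hc, langPolynomial]
  have hφ : φ (∑ k ∈ range (n + 1), c k • φ^[k] z)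
      = ∑ k ∈ range n, c k ^ p ^ e • φ^[k + 1] z
        + t ^ p ^ e • ∑ k ∈ range (n + 1), a k • φ^[k] z := by
    simp only [← ha, map_sum, map_smulₛₗ, iterateFrobenius_def, ← Function.iterate_succ_apply' φ]
    rw [sum_range_succ, hcn]
  refine ⟨∑ k ∈ range (n + 1), c k • φ^[k] z, ?_⟩
  rw [hφ, sum_range_succ' _ n, sum_range_succ' (fun k => c k • φ^[k] z) n, hc0]
  simp only [hcs, add_smul, sub_smul, smul_add, smul_sum, sum_add_distrib, smul_smul, one_smul,
    Function.iterate_zero, id, mul_comm]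
  abel

theorem exists_fixed_of_apply_fixed {V' : Type*} [AddCommGroup V'] [Module K V'] (he : e ≠ 0)
    {φ : V →ₛₗ[iterateFrobenius K p e] V} {ψ : V' →ₛₗ[iterateFrobenius K p e] V'}
    {L : V →ₗ[K] V'} (hL : ∀ y, L (φ y) = ψ (L y))
    {U : Submodule K V} (hU : U ≤ U.comap φ) {y : V} (hy : y ∈ U) (hfix : ψ (L y) = L y) :
    ∃ w ∈ U, φ w = w ∧ L w = L y := by
  let M : Submodule K V := U ⊓ LinearMap.ker L
  have hM (z : M) : φ z ∈ M := by
    refine ⟨hU z.2.1, LinearMap.mem_ker.mpr ?_⟩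
    rw [hL, LinearMap.mem_ker.mp z.2.2, map_zero]
  have hyM : y - φ y ∈ M := by
    refine ⟨U.sub_mem hy (hU hy), LinearMap.mem_ker.mpr ?_⟩
    rw [map_sub, hL, hfix, sub_self]
  obtain ⟨z, hz⟩ := exists_apply_sub_self_eq he ((φ.domRestrict M).codRestrict M hM) ⟨_, hyM⟩
  have hz : φ z - z = y - φ y := congrArg Subtype.val hz
  refine ⟨y + z, U.add_mem hy z.2.1, ?_, ?_⟩
  · rw [map_add, ← sub_eq_zero, add_sub_add_comm, hz, sub_add_sub_cancel', sub_self]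
  · rw [map_add, LinearMap.mem_ker.mp z.2.2, add_zero]

end Lang

/-! ### Cayley transform -/

section Cayley

variable {R V : Type*} [CommRing R] [AddCommGroup V] [Module R V] {S : Module.End R V}

/-- The Cayley transform `(1 + S) (1 - S)⁻¹` of a nilpotent endomorphism, which turns elements of
the Lie algebra of the isometry group of a bilinear form into isometries. Unlike the exponential,
it makes sense in every characteristic. -/
noncomputable def cayleyTransform (S : Module.End R V) (hS : IsNilpotent S) : V ≃ₗ[R] V :=
  (LinearEquiv.ofBijective (1 - S) ((Module.End.isUnit_iff _).mp hS.isUnit_one_sub)).symm.trans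
    (LinearEquiv.ofBijective (1 + S) ((Module.End.isUnit_iff _).mp hS.isUnit_one_add))

theorem cayleyTransform_apply_sub (hS : IsNilpotent S) (a : V) :
    cayleyTransform S hS (a - S a) = a + S a := by
  have h : a - S a = LinearEquiv.ofBijective (1 - S)
    ((Module.End.isUnit_iff _).mp hS.isUnit_one_sub) a := rfl
  rw [h, cayleyTransform, LinearEquiv.trans_apply, LinearEquiv.symm_apply_apply]
  rfl

theorem exists_sub_apply_eq_of_isNilpotent (hS : IsNilpotent S) (a : V) : ∃ b, b - S b = a :=
  ((Module.End.isUnit_iff _).mp hS.isUnit_one_sub).surjective a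

theorem apply_cayleyTransform_apply_cayleyTransform (hS : IsNilpotent S)
    {B : LinearMap.BilinForm R V} (hB : ∀ a b, B (S a) b = -B a (S b)) (a b : V) :
    B (cayleyTransform S hS a) (cayleyTransform S hS b) = B a b := by
  obtain ⟨a, rfl⟩ := exists_sub_apply_eq_of_isNilpotent hS a
  obtain ⟨b, rfl⟩ := exists_sub_apply_eq_of_isNilpotent hS b
  rw [cayleyTransform_apply_sub, cayleyTransform_apply_sub]
  simp only [map_add, map_sub, LinearMap.add_apply, LinearMap.sub_apply, hB]
  ring

theorem cayleyTransform_map_comm (hS : IsNilpotent S) {F : Type*} [FunLike F V V]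
    [AddMonoidHomClass F V V] {f : F} (hf : ∀ a, S (f a) = f (S a)) (a : V) :
    cayleyTransform S hS (f a) = f (cayleyTransform S hS a) := by
  obtain ⟨a, rfl⟩ := exists_sub_apply_eq_of_isNilpotent hS a
  rw [map_sub, ← hf, cayleyTransform_apply_sub, cayleyTransform_apply_sub, map_add, hf]

theorem cayleyTransform_apply_of_apply_apply_eq_zero (hS : IsNilpotent S) {x : V}
    (hx : S (S x) = 0) : cayleyTransform S hS x = x + (2 : R) • S x := by
  have h : x = (x + S x) - S (x + S x) := by rw [map_add, hx]; abel
  nth_rw 1 [h]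
  rw [cayleyTransform_apply_sub, map_add, hx]
  module

end Cayley

/-! ### Rank-one operators made equivariant -/

section RankOneSum

theorem isNilpotent_of_dvd_mul_self {A : Type*} [Ring A] {N S : A} (hNS : Commute N S)
    (hdvd : N ∣ S * S) {n : ℕ} (hn : N ^ n * S = 0) : IsNilpotent S := by
  have hpow (k : ℕ) : N ^ k ∣ (S * S) ^ k := by
    induction k with
    | zero => simp
    | succ k ih =>
      obtain ⟨c, hc⟩ := ih
      obtain ⟨d, hd⟩ := hdvd
      have hcomm : Commute (N ^ k) (S * S) := (hNS.mul_right hNS).pow_left k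
      refine ⟨d * c, ?_⟩
      rw [pow_succ', hc, ← mul_assoc, ← hcomm.eq, hd, pow_succ]
      simp only [mul_assoc]
  obtain ⟨c, hc⟩ := hpow n
  refine ⟨2 * n + 1, ?_⟩
  rw [pow_succ', pow_mul, sq, hc, ← mul_assoc, ← (hNS.pow_left n).eq, hn, zero_mul]

variable {R V : Type*} [CommRing R] [AddCommGroup V] [Module R V]
  {B : LinearMap.BilinForm R V} {N : Module.End R V} {m : ℕ} {u w : V}
  {σ : R →+* R} {φ : V →ₛₗ[σ] V}

theorem map_pow_apply_comm (hφN : ∀ a, φ (N a) = N (φ a)) (k : ℕ) (a : V) :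
    φ ((N ^ k) a) = (N ^ k) (φ a) := by
  simpa only [Module.End.pow_apply] using Function.Commute.iterate_right hφN k a

/-- The operator `a ↦ ∑_{k + l = m} (-1) ^ k B(a, N ^ k u) N ^ l w`: a modification of the
rank-one operator `a ↦ B(a, u) N ^ m w` which commutes with a skew-adjoint `N` as soon as
`N ^ (m + 1)` kills `u` and `w`. -/
def rankOneSum (B : LinearMap.BilinForm R V) (N : Module.End R V) (m : ℕ) (u w : V) :
    Module.End R V :=
  ∑ kl ∈ antidiagonal m,
    (-1 : R) ^ kl.1 • (LinearMap.flip B ((N ^ kl.1) u)).smulRight ((N ^ kl.2) w)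

theorem rankOneSum_apply (a : V) :
    rankOneSum B N m u w a
      = ∑ kl ∈ antidiagonal m, ((-1) ^ kl.1 * B a ((N ^ kl.1) u)) • (N ^ kl.2) w := by
  simp [rankOneSum, LinearMap.sum_apply, mul_smul]

theorem rankOneSum_succ_eq_mul_add : rankOneSum B N (m + 1) u w
    = N * rankOneSum B N m u w
      + (-1 : R) ^ (m + 1) • (LinearMap.flip B ((N ^ (m + 1)) u)).smulRight w := by
  ext a
  simp [rankOneSum_apply, Nat.sum_antidiagonal_succ', mul_smul, pow_succ' N, add_comm]

theorem rankOneSum_succ_eq_add_mul (hN : ∀ a b, B (N a) b = -B a (N b)) :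
    rankOneSum B N (m + 1) u w
      = (LinearMap.flip B u).smulRight ((N ^ (m + 1)) w) + rankOneSum B N m u w * N := by
  ext a
  simp [rankOneSum_apply, Nat.sum_antidiagonal_succ, hN, pow_succ' N, pow_succ (-1 : R)]

theorem commute_rankOneSum (hN : ∀ a b, B (N a) b = -B a (N b))
    (hu : (N ^ (m + 1)) u = 0) (hw : (N ^ (m + 1)) w = 0) :
    Commute N (rankOneSum B N m u w) := by
  have hleft := rankOneSum_succ_eq_mul_add (B := B) (N := N) (m := m) (u := u) (w := w)
  have hright := rankOneSum_succ_eq_add_mul hN (m := m) (u := u) (w := w)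
  simp only [hu, hw, map_zero, LinearMap.zero_smulRight, LinearMap.smulRight_zero, smul_zero,
    add_zero, zero_add] at hleft hright
  exact hleft.symm.trans hright

theorem dvd_rankOneSum (hu : (N ^ m) u = 0) : N ∣ rankOneSum B N m u w := by
  cases m with
  | zero =>
    have hu : u = 0 := by simpa using hu
    simp [rankOneSum, hu]
  | succ m =>
    rw [rankOneSum_succ_eq_mul_add, hu, map_zero, LinearMap.zero_smulRight, smul_zero, add_zero]
    exact dvd_mul_right _ _

theorem rankOneSum_apply_of_mem_ker (hN : ∀ a b, B (N a) b = -B a (N b)) {x : V}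
    (hx : N x = 0) : rankOneSum B N m u w x = B x u • (N ^ m) w := by
  cases m with
  | zero => simp [rankOneSum_apply]
  | succ m => simp [rankOneSum_succ_eq_add_mul hN, hx]

theorem rankOneSum_mul_self (hwu : ∀ k l, B ((N ^ k) w) ((N ^ l) u) = 0) :
    rankOneSum B N m u w * rankOneSum B N m u w = 0 := by
  ext a
  rw [Module.End.mul_apply, rankOneSum_apply, rankOneSum_apply a]
  simp [LinearMap.sum_apply, hwu]

theorem pow_mul_rankOneSum {n : ℕ} (hw : (N ^ n) w = 0) : N ^ n * rankOneSum B N m u w = 0 := by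
  have hpow (l : ℕ) : (N ^ n) ((N ^ l) w) = 0 := by
    rw [← Module.End.mul_apply, (Commute.pow_pow_self N n l).eq, Module.End.mul_apply, hw,
      map_zero]
  ext a
  simp [rankOneSum_apply, hpow]

theorem rankOneSum_map_comm (hφB : ∀ a b, B (φ a) (φ b) = σ (B a b))
    (hφN : ∀ a, φ (N a) = N (φ a)) (hu : φ u = u) (hw : φ w = w) (a : V) :
    rankOneSum B N m u w (φ a) = φ (rankOneSum B N m u w a) := by
  rw [rankOneSum_apply, rankOneSum_apply, map_sum]
  refine sum_congr rfl fun kl _ => ?_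
  rw [map_smulₛₗ, map_mul, ← hφB, map_pow_apply_comm hφN, map_pow_apply_comm hφN, hu, hw,
    map_pow, map_neg, map_one]

theorem apply_rankOneSum (a b : V) : B (rankOneSum B N m u w a) b
    = B a ((-1 : R) ^ m • rankOneSum (LinearMap.flip B) N m w u b) := by
  rw [rankOneSum_apply, rankOneSum_apply, ← Nat.sum_antidiagonal_swap]
  simp only [smul_sum, map_sum, LinearMap.sum_apply, map_smul, LinearMap.smul_apply, smul_eq_mul,
    LinearMap.flip_apply, Prod.fst_swap, Prod.snd_swap]
  refine sum_congr rfl fun kl hkl => ?_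
  have hsign : (-1 : R) ^ m * (-1) ^ kl.1 = (-1) ^ kl.2 := by
    rw [← mem_antidiagonal.mp hkl, pow_add, mul_right_comm, ← mul_pow]
    simp
  rw [← hsign]
  ring

/-- The difference of `rankOneSum B N m u w` and its adjoint with respect to `B`. -/
def skewRankOneSum (B : LinearMap.BilinForm R V) (N : Module.End R V) (m : ℕ) (u w : V) :
    Module.End R V :=
  rankOneSum B N m u w - (-1 : R) ^ m • rankOneSum (LinearMap.flip B) N m w u

theorem flip_skewAdjoint (hN : ∀ a b, B (N a) b = -B a (N b)) (a b : V) :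
    LinearMap.flip B (N a) b = -LinearMap.flip B a (N b) := by
  rw [LinearMap.flip_apply, LinearMap.flip_apply, hN, neg_neg]

theorem apply_skewRankOneSum {ε : R} (hB : ∀ a b, B a b = ε * B b a) (a b : V) :
    B (skewRankOneSum B N m u w a) b = -B a (skewRankOneSum B N m u w b) := by
  have hadj := apply_rankOneSum (B := B) (N := N) (m := m) (u := u) (w := w)
  have hadj' : B ((-1 : R) ^ m • rankOneSum (LinearMap.flip B) N m w u a) b
      = B a (rankOneSum B N m u w b) := by
    rw [hB, ← hadj, ← hB]
  rw [skewRankOneSum, LinearMap.sub_apply, LinearMap.sub_apply, LinearMap.smul_apply,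
    LinearMap.smul_apply, map_sub, map_sub, LinearMap.sub_apply, hadj, hadj', neg_sub]

theorem commute_skewRankOneSum (hN : ∀ a b, B (N a) b = -B a (N b))
    (hu : (N ^ (m + 1)) u = 0) (hw : (N ^ (m + 1)) w = 0) :
    Commute N (skewRankOneSum B N m u w) :=
  (commute_rankOneSum hN hu hw).sub_right
    ((commute_rankOneSum (flip_skewAdjoint hN) hw hu).smul_right _)

theorem skewRankOneSum_map_comm (hφB : ∀ a b, B (φ a) (φ b) = σ (B a b))
    (hφN : ∀ a, φ (N a) = N (φ a)) (hu : φ u = u) (hw : φ w = w) (a : V) :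
    skewRankOneSum B N m u w (φ a) = φ (skewRankOneSum B N m u w a) := by
  have hφB' (a b : V) : LinearMap.flip B (φ a) (φ b) = σ (LinearMap.flip B a b) := hφB b a
  simp only [skewRankOneSum, LinearMap.sub_apply, LinearMap.smul_apply, map_sub, map_smulₛₗ,
    map_pow, map_neg, map_one, rankOneSum_map_comm hφB hφN hu hw,
    rankOneSum_map_comm hφB' hφN hw hu]

theorem skewRankOneSum_apply_of_mem_ker (hN : ∀ a b, B (N a) b = -B a (N b))
    (hu : (N ^ m) u = 0) {x : V} (hx : N x = 0) :
    skewRankOneSum B N m u w x = B x u • (N ^ m) w := by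
  rw [skewRankOneSum, LinearMap.sub_apply, LinearMap.smul_apply,
    rankOneSum_apply_of_mem_ker hN hx, rankOneSum_apply_of_mem_ker (flip_skewAdjoint hN) hx, hu,
    smul_zero, smul_zero, sub_zero]

theorem isNilpotent_skewRankOneSum (hN : ∀ a b, B (N a) b = -B a (N b))
    (hu : (N ^ m) u = 0) (hw : (N ^ (m + 1)) w = 0)
    (hwu : ∀ k l, B ((N ^ k) w) ((N ^ l) u) = 0) :
    IsNilpotent (skewRankOneSum B N m u w) := by
  have hu' : (N ^ (m + 1)) u = 0 := by rw [pow_succ', Module.End.mul_apply, hu, map_zero]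
  set T := rankOneSum B N m u w with hT
  set T' := (-1 : R) ^ m • rankOneSum (LinearMap.flip B) N m w u with hT'
  have hS : skewRankOneSum B N m u w = T - T' := rfl
  have hdvd : N ∣ T := dvd_rankOneSum hu
  have hcomm : Commute N T' := (commute_rankOneSum (flip_skewAdjoint hN) hw hu').smul_right _
  have hdvd' : N ∣ T' * T := by
    obtain ⟨T₀, hT₀⟩ := hdvd
    exact ⟨T' * T₀, by rw [hT₀, ← mul_assoc, ← hcomm.eq, mul_assoc]⟩
  have hsq : T' * T' = 0 := by
    rw [hT', smul_mul_smul_comm, rankOneSum_mul_self fun k l => hwu l k, smul_zero]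
  refine isNilpotent_of_dvd_mul_self (commute_skewRankOneSum hN hu' hw) ?_ (n := m + 1) ?_
  · rw [hS, sub_mul, mul_sub T', hsq, sub_zero]
    exact dvd_sub (hdvd.mul_right _) hdvd'
  · rw [hS, mul_sub, hT, hT', pow_mul_rankOneSum hw, mul_smul_comm, pow_mul_rankOneSum hu',
      smul_zero, sub_zero]

theorem exists_isometry_apply_eq_add_two_smul {ε : R} (hB : ∀ a b, B a b = ε * B b a)
    (hφB : ∀ a b, B (φ a) (φ b) = σ (B a b)) (hN : ∀ a b, B (N a) b = -B a (N b))
    (hφN : ∀ a, φ (N a) = N (φ a)) (hφu : φ u = u) (hφw : φ w = w)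
    (hu : (N ^ m) u = 0) (hw : (N ^ (m + 1)) w = 0)
    (hwu : ∀ k l, B ((N ^ k) w) ((N ^ l) u) = 0) {x : V} (hx : N x = 0) :
    ∃ g : V ≃ₗ[R] V,
      (∀ a b, B (g a) (g b) = B a b) ∧
      (∀ a, g (N a) = N (g a)) ∧
      (∀ a, g (φ a) = φ (g a)) ∧
      g x = x + (2 * B x u) • (N ^ m) w := by
  have hu' : (N ^ (m + 1)) u = 0 := by rw [pow_succ', Module.End.mul_apply, hu, map_zero]
  have hNw : N ((N ^ m) w) = 0 := by rw [← Module.End.mul_apply, ← pow_succ', hw]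
  have hBwu : B ((N ^ m) w) u = 0 := by simpa using hwu m 0
  have hS := isNilpotent_skewRankOneSum hN hu hw hwu
  have hNS := commute_skewRankOneSum hN hu' hw
  have hSx := skewRankOneSum_apply_of_mem_ker hN hu (w := w) hx
  have hSSx : skewRankOneSum B N m u w (skewRankOneSum B N m u w x) = 0 := by
    rw [hSx, map_smul, skewRankOneSum_apply_of_mem_ker hN hu hNw, hBwu, zero_smul, smul_zero]
  refine ⟨cayleyTransform _ hS,
    apply_cayleyTransform_apply_cayleyTransform hS (apply_skewRankOneSum hB),
    cayleyTransform_map_comm hS fun a => (LinearMap.congr_fun hNS.eq a).symm,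
    cayleyTransform_map_comm hS (skewRankOneSum_map_comm hφB hφN hφu hφw), ?_⟩
  rw [cayleyTransform_apply_of_apply_apply_eq_zero hS hSSx, hSx, smul_smul]

end RankOneSum

/-! ### Orthogonal decompositions -/

theorem iSup_inf_ker_le {ι R V : Type*} [Ring R] [AddCommGroup V] [Module R V]
    {W : ι → Submodule R V} (hind : iSupIndep W) {N : Module.End R V}
    (hN : ∀ j, W j ≤ (W j).comap N) :
    (⨆ j, W j) ⊓ LinearMap.ker N ≤ ⨆ j, W j ⊓ LinearMap.ker N := by
  rintro v ⟨hv, hNv⟩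
  obtain ⟨f, hf, rfl⟩ := (Submodule.mem_iSup_iff_exists_finsupp W v).mp hv
  have hNf : ∀ j ∈ f.support, N (f j) = 0 :=
    (iSupIndep_iff_finsetSum_eq_zero_imp_eq_zero W).mp hind f.support (fun j => N (f j))
      (fun j _ => hN j (hf j)) (by simpa [Finsupp.sum] using hNv)
  exact Submodule.sum_mem _ fun j hj => Submodule.mem_iSup_of_mem j ⟨hf j, hNf j hj⟩

theorem iSup_le_comap_iSup {ι R V : Type*} [Semiring R] [AddCommMonoid V] [Module R V]
    {W : ι → Submodule R V} {σ : R →+* R} {f : V →ₛₗ[σ] V} (hf : ∀ j, W j ≤ (W j).comap f) :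
    ⨆ j, W j ≤ (⨆ j, W j).comap f :=
  iSup_le fun j => (hf j).trans (Submodule.comap_mono (le_iSup W j))

section Main

variable {K V : Type*} [Field K] [IsSepClosed K] {p e : ℕ} [Fact p.Prime] [CharP K p]
  [AddCommGroup V] [Module K V] [FiniteDimensional K V] {B : LinearMap.BilinForm K V}
  {φ : V →ₛₗ[iterateFrobenius K p e] V} {N : Module.End K V}

theorem exists_fixed_apply_eq_one (he : e ≠ 0)
    (hφB : ∀ a b, B (φ a) (φ b) = iterateFrobenius K p e (B a b)) {A : Submodule K V}
    (hA : A ≤ A.comap φ) {x : V} (hφx : φ x = x) (hx : ∃ y ∈ A, B x y ≠ 0) :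
    ∃ u ∈ A, φ u = u ∧ B x u = 1 := by
  obtain ⟨y, hyA, hy⟩ := hx
  have hy1 : B x ((B x y)⁻¹ • y) = 1 := by rw [map_smul, smul_eq_mul, inv_mul_cancel₀ hy]
  have hBφ (z : V) : B x (φ z) = (iterateFrobenius K p e).toSemilinearMap (B x z) := by
    conv_lhs => rw [← hφx]
    exact hφB x z
  obtain ⟨u, huA, hφu, hu⟩ := exists_fixed_of_apply_fixed he hBφ hA (A.smul_mem _ hyA)
    (by rw [hy1]; exact map_one (iterateFrobenius K p e))
  exact ⟨u, huA, hφu, hu.trans hy1⟩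

theorem exists_isometry_apply_eq_add (he : e ≠ 0) (h2 : (2 : K) ≠ 0) {ε : K}
    (hB : ∀ a b, B a b = ε * B b a)
    (hφB : ∀ a b, B (φ a) (φ b) = iterateFrobenius K p e (B a b))
    (hN : ∀ a b, B (N a) b = -B a (N b)) (hφN : ∀ a, φ (N a) = N (φ a))
    {A U : Submodule K V} (hNA : A ≤ A.comap N) (hφA : A ≤ A.comap φ)
    (hNU : U ≤ U.comap N) (hφU : U ≤ U.comap φ) (hUA : ∀ a ∈ U, ∀ b ∈ A, B a b = 0)
    {m : ℕ} (hNmA : ∀ a ∈ A, (N ^ m) a = 0)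
    {x : V} (hNx : N x = 0) (hφx : φ x = x) (hx : ∃ y ∈ A, B x y ≠ 0)
    {v : V} (hvU : v ∈ U.map (N ^ m)) (hNv : N v = 0) (hφv : φ v = v) :
    ∃ g : V ≃ₗ[K] V,
      (∀ a b, B (g a) (g b) = B a b) ∧
      (∀ a, g (N a) = N (g a)) ∧
      (∀ a, g (φ a) = φ (g a)) ∧
      g x = x + v := by
  obtain ⟨u, huA, hφu, hxu⟩ := exists_fixed_apply_eq_one he hφB hφA hφx hx
  obtain ⟨w₀, hw₀U, hw₀⟩ := U.map (N ^ m) |>.smul_mem (2⁻¹ : K) hvU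
  obtain ⟨w, hwU, hφw, hw⟩ := exists_fixed_of_apply_fixed he
    (fun a => (map_pow_apply_comm hφN m a).symm) hφU hw₀U
    (by rw [hw₀, map_smulₛₗ, hφv, map_inv₀, map_ofNat])
  rw [hw₀] at hw
  have hNw : (N ^ (m + 1)) w = 0 := by
    rw [pow_succ', Module.End.mul_apply, hw, map_smul, hNv, smul_zero]
  have hwu (k l : ℕ) : B ((N ^ k) w) ((N ^ l) u) = 0 :=
    hUA _ (U.le_comap_pow_of_le_comap hNU k hwU) _ (A.le_comap_pow_of_le_comap hNA l huA)
  obtain ⟨g, hgB, hgN, hgφ, hgx⟩ := exists_isometry_apply_eq_add_two_smul hB hφB hN hφN hφu hφw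
    (hNmA u huA) hNw hwu hNx
  refine ⟨g, hgB, hgN, hgφ, ?_⟩
  rw [hgx, hxu, hw, mul_one, smul_inv_smul₀ h2]

theorem stmt19_general (he : e ≠ 0) (hp : p ≠ 2) {ε : K} (hB : ∀ a b, B a b = ε * B b a)
    (hφB : ∀ a b, B (φ a) (φ b) = iterateFrobenius K p e (B a b))
    (hN : ∀ a b, B (N a) b = -B a (N b)) (hφN : ∀ a, φ (N a) = N (φ a))
    {W : ℕ → Submodule K V} (hint : DirectSum.IsInternal W)
    (horth : ∀ j j', j ≠ j' → ∀ a ∈ W j, ∀ b ∈ W j', B a b = 0)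
    (hNW : ∀ j, ∀ a ∈ W j, N a ∈ W j) (hφW : ∀ j, ∀ a ∈ W j, φ a ∈ W j)
    {i : ℕ} (hpow : ∀ a ∈ W i, (N ^ i) a = 0)
    (hker : ∀ j > i, ∀ a ∈ W j, N a = 0 → ∃ y ∈ W j, (N ^ (j - 1)) y = a)
    {x : V} (hxW : x ∈ W i) (hNx : N x = 0) (hBx : B x ≠ 0) (hφx : φ x = x)
    {v : V} (hvW : v ∈ ⨆ j > i, W j) (hNv : N v = 0) (hφv : φ v = v) :
    ∃ g : V ≃ₗ[K] V,
      (∀ a b, B (g a) (g b) = B a b) ∧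
      (∀ a, g (N a) = N (g a)) ∧
      (∀ a, g (φ a) = φ (g a)) ∧
      g x = x + v := by
  have h2 : (2 : K) ≠ 0 := by
    exact_mod_cast CharP.cast_ne_zero_of_ne_of_prime K Nat.prime_two hp
  let U : Submodule K V := ⨆ j : Set.Ioi i, W j
  have hvU : v ∈ U := by rwa [iSup_subtype'] at hvW
  have hNU : U ≤ U.comap N :=
    iSup_le_comap_iSup (W := fun j : Set.Ioi i => W j) fun j => hNW j
  have hφU : U ≤ U.comap φ :=
    iSup_le_comap_iSup (W := fun j : Set.Ioi i => W j) fun j => hφW j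
  have hUA : U ≤ (W i).orthogonalBilin (LinearMap.flip B) :=
    iSup_le fun j a ha b hb => horth j i j.2.ne' a ha b hb
  have hx : ∃ y ∈ W i, B x y ≠ 0 := by
    by_contra! h
    have htop : ⨆ j, W j ≤ LinearMap.ker (B x) := iSup_le fun j y hy => by
      obtain rfl | hj := eq_or_ne i j
      exacts [h y hy, horth i j hj x hxW y hy]
    rw [hint.submodule_iSup_eq_top, top_le_iff, LinearMap.ker_eq_top] at htop
    exact hBx htop
  have hkerU : U ⊓ LinearMap.ker N ≤ U.map (N ^ i) := by
    refine (iSup_inf_ker_le (hint.submodule_iSupIndep.comp Subtype.val_injective)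
      (W := W ∘ Subtype.val) (fun j : Set.Ioi i => hNW j)).trans (iSup_le ?_)
    rintro ⟨j, hj : i < j⟩ a ⟨ha, hNa⟩
    obtain ⟨y, hy, rfl⟩ := hker j hj a ha hNa
    have hyU : y ∈ U := Submodule.mem_iSup_of_mem ⟨j, hj⟩ hy
    refine ⟨(N ^ (j - 1 - i)) y, U.le_comap_pow_of_le_comap hNU _ hyU, ?_⟩
    rw [← Module.End.mul_apply, ← pow_add, Nat.add_sub_cancel' (Nat.le_sub_one_of_lt hj)]
  exact exists_isometry_apply_eq_add he h2 hB hφB hN hφN (hNW i) (hφW i) hNU hφU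
    (fun a ha b hb => hUA ha b hb) hpow hNx hφx hx (hkerU ⟨hvU, hNv⟩) hNv hφv

end Main

/-- Existence of an element of `Z_{Sp(V)}(N)^{F'}` moving `x` to `x + v`: given a
`q`-Frobenius `φ` on a symplectic space `V` over an algebraically closed field of odd
characteristic `p`, a `φ`-equivariant skew-adjoint nilpotent `N`, an orthogonal,
`N`-stable and `φ`-stable decomposition `V = ⨁ⱼ Wⱼ` with `N|_{Wⱼ}` of Jordan type
`(j^{mⱼ})`, a nonzero `φ`-fixed `x ∈ ker N ∩ W i` and a `φ`-fixed
`v ∈ ker N ∩ ⨁_{j>i} Wⱼ`, there is a symplectic automorphism `g` commuting with `N` and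
with `φ` such that `g x = x + v`. -/
theorem stmt19 (p q : ℕ) (hp : p.Prime) (hpodd : Odd p)
    (hq : ∃ e : ℕ, 0 < e ∧ q = p ^ e)
    (K : Type*) [Field K] [IsAlgClosed K] [CharP K p]
    (V : Type*) [AddCommGroup V] [Module K V] [FiniteDimensional K V]
    (B : V →ₗ[K] V →ₗ[K] K)
    (hBnd : ∀ x : V, (∀ y : V, B x y = 0) → x = 0)
    (halt : ∀ x : V, B x x = 0)
    (φ : V → V) (hφbij : Function.Bijective φ)
    (hφadd : ∀ x y : V, φ (x + y) = φ x + φ y)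
    (hφsmul : ∀ (a : K) (w : V), φ (a • w) = a ^ q • φ w)
    (hφB : ∀ x y : V, B (φ x) (φ y) = (B x y) ^ q)
    (N : Module.End K V)
    (hskew : ∀ x y : V, B (N x) y = - B x (N y))
    (hnil : IsNilpotent N)
    (hNφ : ∀ w : V, φ (N w) = N (φ w))
    (W : ℕ → Submodule K V)
    (hint : DirectSum.IsInternal W)
    (horth : ∀ j j' : ℕ, j ≠ j' → ∀ x ∈ W j, ∀ y ∈ W j', B x y = 0)
    (hNW : ∀ j : ℕ, ∀ x ∈ W j, N x ∈ W j)
    (hφW : ∀ j : ℕ, ∀ x ∈ W j, φ x ∈ W j)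
    (hJordanPow : ∀ j : ℕ, ∀ x ∈ W j, (N ^ j) x = 0)
    (hJordanKer : ∀ j : ℕ, ∀ x ∈ W j, N x = 0 → ∃ y ∈ W j, (N ^ (j - 1)) y = x)
    (i : ℕ) (x : V) (hxW : x ∈ W i) (hxker : N x = 0) (hxne : x ≠ 0) (hφx : φ x = x)
    (v : V) (hvW : v ∈ ⨆ j > i, W j) (hvker : N v = 0) (hφv : φ v = v) :
    ∃ g : V ≃ₗ[K] V,
      (∀ a b : V, B (g a) (g b) = B a b) ∧
      (∀ w : V, g (N w) = N (g w)) ∧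
      (∀ w : V, g (φ w) = φ (g w)) ∧
      g x = x + v := by
  obtain ⟨e, he, rfl⟩ := hq
  have := Fact.mk hp
  let Φ : V →ₛₗ[iterateFrobenius K p e] V :=
    { toFun := φ, map_add' := hφadd, map_smul' := hφsmul }
  exact stmt19_general (φ := Φ) (ε := -1) he.ne' (hpodd.ne_two_of_dvd_nat dvd_rfl)
    (fun a b => by rw [neg_one_mul, LinearMap.IsAlt.neg halt]) hφB hskew hNφ hint horth hNW hφW
    (hJordanPow i) (fun j _ => hJordanKer j) hxW hxker
    (fun h => hxne (hBnd x (LinearMap.congr_fun h))) hφx hvW hvker hφv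
end
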